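/- arXiv:2505.17600 — 3 statements merged into one kernel-verified Lean document; each statement's English description precedes it below -/
import Mathlib

section
/- Let X be a real Banach space with dim X ≥ 3. If T₂(1,1,X) = √2, then X is a Hilbert space; that is, the norm of X is induced by an inner product (equivalently, the parallelogram identity ‖x+y‖² + ‖x−y‖² = 2‖x‖² + 2‖y‖² holds for all x, y ∈ X). -/
/-!
The hypothesis says that `‖u + v‖ * ‖u - v‖ ≤ 2` for all unit vectors `u`, `v`. Given two
independent vectors, add a third one and work in their three-dimensional span, with frames written
in coordinates as the rows of 3 × 3 matrices. Choose a frame in the unit ball of maximal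
determinant and use it as the basis, normalising that determinant to `1`.

The key point is that the set of maximal frames is stable under rotating two of the vectors
`u`, `v` by 45°. Put `c = ‖u + v‖`, `d = ‖u - v‖`. Maximality gives
`‖a u + b v‖ ≥ max (a, b)`, so the vectors `(u + v)/c ± (u - v)/d` both have norm at least
`1/c + 1/d`. As `(u + v)/c` and `(u - v)/d` are unit vectors, `(1/c + 1/d)² ≤ 2`, which together
with `c d ≤ 2` forces `c = d = √2` (`ExtremalNorm.pair`). So `((u ∓ v)/√2, (u ± v)/√2, w)` is again
a maximal frame.

The 45° rotations about two coordinate axes generate a dense subgroup of `SO(3)`. What is needed of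
this is that a closed monoid `S` of orthogonal matrices containing both has every Euclidean unit
vector `w` as the first row of a member (`exists_row_eq`). The product of the two rotations has
infinite order, by a parity argument in `ℤ[√2]` (`pow_ne_one`); so its powers accumulate at the
identity and there is a nonzero skew-symmetric limit direction `N` (`exists_tangent`). If
the first row `v` of a member of `S` maximises the Euclidean product with `w`, the first-order
conditions along `N` and along its conjugates by signed permutation matrices give `v × w = 0`,
hence `v = w`. Applied to the monoid of orthogonal matrices preserving the maximal frames, this shows
that the norm is `1` on the whole Euclidean unit sphere, i.e. that it is Euclidean on the chosen
three-dimensional subspace.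
-/

/-- The skew constant `T₂(κ,τ,X) = sup{ (‖κx + τy‖ ‖τx − κy‖)^{1/2} : x, y ∈ S(X) }`. -/
noncomputable def T2 (X : Type*) [NormedAddCommGroup X] [NormedSpace ℝ X] (κ τ : ℝ) : ℝ :=
  sSup {r : ℝ | ∃ x y : X, ‖x‖ = 1 ∧ ‖y‖ = 1 ∧
    r = Real.sqrt (‖κ • x + τ • y‖ * ‖τ • x - κ • y‖)}

open Matrix Filter Topology

/-! ### Maximal frames -/

/-- A positive homogeneous function `p` on `ℝ³` (a norm, except that the triangle inequality is never
needed) satisfying the inequality `p (u + v) * p (u - v) ≤ 2` on its unit sphere, and for which the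
standard basis is a frame of maximal determinant among all frames, given by the rows of a matrix,
in the unit ball of `p`. -/
structure ExtremalNorm (p : (Fin 3 → ℝ) → ℝ) : Prop where
  cont : Continuous p
  smul : ∀ (a : ℝ) v, p (a • v) = |a| * p v
  nonneg : ∀ v, 0 ≤ p v
  pos : ∀ v, v ≠ 0 → 0 < p v
  skew : ∀ u v, p u = 1 → p v = 1 → p (u + v) * p (u - v) ≤ 2
  basis : ∀ i, p ((1 : Matrix (Fin 3) (Fin 3) ℝ) i) ≤ 1
  max : ∀ B : Matrix (Fin 3) (Fin 3) ℝ, (∀ i, p (B i) ≤ 1) → B.det ≤ 1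

section
variable {p : (Fin 3 → ℝ) → ℝ}

/-- Maximality of the standard basis, in homogeneous form. -/
theorem ExtremalNorm.hadamard (hp : ExtremalNorm p) (u v w : Fin 3 → ℝ) :
    (Matrix.of ![u, v, w]).det ≤ p u * p v * p w := by
  by_cases hu : u = 0
  · have : (Matrix.of ![u, v, w]).det = 0 := by
      subst hu; simp [Matrix.det_fin_three]
    rw [this]
    exact mul_nonneg (mul_nonneg (hp.nonneg _) (hp.nonneg _)) (hp.nonneg _)
  by_cases hv : v = 0
  · have : (Matrix.of ![u, v, w]).det = 0 := by
      subst hv; simp [Matrix.det_fin_three]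
    rw [this]
    exact mul_nonneg (mul_nonneg (hp.nonneg _) (hp.nonneg _)) (hp.nonneg _)
  by_cases hw : w = 0
  · have : (Matrix.of ![u, v, w]).det = 0 := by
      subst hw; simp [Matrix.det_fin_three]
    rw [this]
    exact mul_nonneg (mul_nonneg (hp.nonneg _) (hp.nonneg _)) (hp.nonneg _)
  have h1 := hp.pos u hu
  have h2 := hp.pos v hv
  have h3 := hp.pos w hw
  have key := hp.max (Matrix.of ![(p u)⁻¹ • u, (p v)⁻¹ • v, (p w)⁻¹ • w]) (by
    have aux : ∀ x, 0 < p x → p ((p x)⁻¹ • x) ≤ 1 := fun x hx => by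
      rw [hp.smul, abs_of_pos (inv_pos.2 hx), inv_mul_cancel₀ hx.ne']
    intro i
    fin_cases i
    exacts [aux u h1, aux v h2, aux w h3])
  have e : (Matrix.of ![(p u)⁻¹ • u, (p v)⁻¹ • v, (p w)⁻¹ • w]).det
      = (p u * p v * p w)⁻¹ * (Matrix.of ![u, v, w]).det := by
    simp [Matrix.det_fin_three]; ring
  rw [e, inv_mul_le_iff₀ (by positivity)] at key
  simpa using key

/-- The frames of maximal determinant: rows in the unit ball of `p`, determinant `1`. -/
def Frames (p : (Fin 3 → ℝ) → ℝ) : Set (Matrix (Fin 3) (Fin 3) ℝ) :=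
  {B | (∀ i, p (B i) ≤ 1) ∧ B.det = 1}

/-- Two unit vectors `u`, `v` whose coordinate functionals have norm at most one on their span
satisfy `p (u ± v) = √2`. -/
theorem ExtremalNorm.pair (hp : ExtremalNorm p) {u v : Fin 3 → ℝ} (hu : p u = 1) (hv : p v = 1)
    (h : ∀ a b : ℝ, a ≤ p (a • u + b • v) ∧ b ≤ p (a • u + b • v)) :
    p (u + v) = √2 ∧ p (u - v) = √2 := by
  have hc : 1 ≤ p (u + v) := by simpa using (h 1 1).1
  have hd : 1 ≤ p (u - v) := by simpa [sub_eq_add_neg] using (h 1 (-1)).1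
  have hcd := hp.skew u v hu hv
  set c := p (u + v) with hc'
  set d := p (u - v) with hd'
  have hc0 : 0 < c := by linarith
  have hd0 : 0 < d := by linarith
  -- The skew inequality for the normalised diagonals gives the reverse bound `c * d ≥ 2`.
  have h2 := hp.skew (c⁻¹ • (u + v)) (d⁻¹ • (u - v))
    (by rw [hp.smul, abs_of_pos (inv_pos.2 hc0), ← hc', inv_mul_cancel₀ hc0.ne'])
    (by rw [hp.smul, abs_of_pos (inv_pos.2 hd0), ← hd', inv_mul_cancel₀ hd0.ne'])
  have e1 : c⁻¹ • (u + v) + d⁻¹ • (u - v) = (c⁻¹ + d⁻¹) • u + (c⁻¹ - d⁻¹) • v := by module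
  have e2 : c⁻¹ • (u + v) - d⁻¹ • (u - v) = (c⁻¹ - d⁻¹) • u + (c⁻¹ + d⁻¹) • v := by module
  rw [e1, e2] at h2
  have h3 : (c⁻¹ + d⁻¹) * (c⁻¹ + d⁻¹) ≤ 2 :=
    (mul_le_mul (h _ _).1 (h _ _).2 (by positivity) (hp.nonneg _)).trans h2
  have h4 : (c + d) ^ 2 ≤ 2 * (c * d) ^ 2 := by
    have : (c⁻¹ + d⁻¹) * (c⁻¹ + d⁻¹) = (c + d) ^ 2 / (c * d) ^ 2 := by field_simp; ring
    rw [this, div_le_iff₀ (by positivity)] at h3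
    exact h3
  have hpos : 0 < c * d := by positivity
  have h5 : (c - d) ^ 2 ≤ 0 := by nlinarith
  have h6 : c = d := by nlinarith [pow_eq_zero_iff (two_ne_zero) |>.1 (le_antisymm h5 (sq_nonneg (c - d)))]
  have h7 : c ^ 2 = 2 := by
    rw [← h6] at h4 hcd hpos
    apply le_antisymm <;> nlinarith
  have h8 : c = √2 := by rw [← h7, Real.sqrt_sq hc0.le]
  exact ⟨h8, h6 ▸ h8⟩

/-- Left multiplication by `R01` rotates the first two rows of a matrix by 45°. -/
noncomputable def R01 : Matrix (Fin 3) (Fin 3) ℝ :=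
  !![(√2)⁻¹, -(√2)⁻¹, 0; (√2)⁻¹, (√2)⁻¹, 0; 0, 0, 1]
/-- Left multiplication by `R12` rotates the last two rows of a matrix by 45°. -/
noncomputable def R12 : Matrix (Fin 3) (Fin 3) ℝ :=
  !![1, 0, 0; 0, (√2)⁻¹, -(√2)⁻¹; 0, (√2)⁻¹, (√2)⁻¹]

theorem ExtremalNorm.frame_eq_one (hp : ExtremalNorm p) {B : Matrix (Fin 3) (Fin 3) ℝ} (hB : B ∈ Frames p)
    (i : Fin 3) : p (B i) = 1 := by
  have h := hp.hadamard (B 0) (B 1) (B 2)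
  have e : (Matrix.of ![B 0, B 1, B 2]) = B := by
    ext i j; fin_cases i <;> rfl
  rw [e, hB.2] at h
  have h0 := hB.1 0
  have h1 := hB.1 1
  have h2 := hB.1 2
  have n0 := hp.nonneg (B 0)
  have n1 := hp.nonneg (B 1)
  have n2 := hp.nonneg (B 2)
  have m01 : p (B 0) * p (B 1) ≤ 1 := mul_le_one₀ h0 n1 h1
  have k2 : p (B 2) = 1 := by nlinarith
  rw [k2] at h
  have k0 : p (B 0) = 1 := by nlinarith
  have k1 : p (B 1) = 1 := by nlinarith
  fin_cases i
  exacts [k0, k1, k2]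

theorem R01_det : R01.det = 1 := by
  simp [R01, Matrix.det_fin_three]
  rw [← mul_inv]; norm_num

theorem R12_det : R12.det = 1 := by
  simp [R12, Matrix.det_fin_three]
  rw [← mul_inv]; norm_num

theorem ExtremalNorm.R01_mul (hp : ExtremalNorm p) {B : Matrix (Fin 3) (Fin 3) ℝ} (hB : B ∈ Frames p) :
    R01 * B ∈ Frames p := by
  have h1 := hp.frame_eq_one hB
  have hs : (0:ℝ) < (√2)⁻¹ := by positivity
  obtain ⟨hc, hd⟩ := hp.pair (h1 0) (h1 1) (fun a b => by
    have d := hB.2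
    rw [Matrix.det_fin_three] at d
    constructor
    · have := hp.hadamard (a • B 0 + b • B 1) (B 1) (B 2)
      rw [h1, h1, mul_one, mul_one] at this
      convert this using 1
      simp [Matrix.det_fin_three]
      linear_combination -a * d
    · have := hp.hadamard (B 0) (a • B 0 + b • B 1) (B 2)
      rw [h1, h1, mul_one, one_mul] at this
      convert this using 1
      simp [Matrix.det_fin_three]
      linear_combination -b * d)
  refine ⟨fun i => ?_, by rw [Matrix.det_mul, R01_det, hB.2, one_mul]⟩
  fin_cases i
  · have : (R01 * B) 0 = (√2)⁻¹ • (B 0 - B 1) := by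
      ext j; simp [R01, Matrix.mul_apply, Fin.sum_univ_three]; ring
    simp [this, hp.smul, abs_of_pos hs, hd]
  · have : (R01 * B) 1 = (√2)⁻¹ • (B 0 + B 1) := by
      ext j; simp [R01, Matrix.mul_apply, Fin.sum_univ_three]; ring
    simp [this, hp.smul, abs_of_pos hs, hc, -smul_add]
  · have : (R01 * B) 2 = B 2 := by
      ext j; simp [R01, Matrix.mul_apply, Fin.sum_univ_three]
    simp [this, h1]

theorem ExtremalNorm.R12_mul (hp : ExtremalNorm p) {B : Matrix (Fin 3) (Fin 3) ℝ} (hB : B ∈ Frames p) :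
    R12 * B ∈ Frames p := by
  have h1 := hp.frame_eq_one hB
  have hs : (0:ℝ) < (√2)⁻¹ := by positivity
  obtain ⟨hc, hd⟩ := hp.pair (h1 1) (h1 2) (fun a b => by
    have d := hB.2
    rw [Matrix.det_fin_three] at d
    constructor
    · have := hp.hadamard (B 0) (a • B 1 + b • B 2) (B 2)
      rw [h1, h1, mul_one, one_mul] at this
      convert this using 1
      simp [Matrix.det_fin_three]
      linear_combination -a * d
    · have := hp.hadamard (B 0) (B 1) (a • B 1 + b • B 2)
      rw [h1, h1, one_mul, one_mul] at this
      convert this using 1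
      simp [Matrix.det_fin_three]
      linear_combination -b * d)
  refine ⟨fun i => ?_, by rw [Matrix.det_mul, R12_det, hB.2, one_mul]⟩
  fin_cases i
  · have : (R12 * B) 0 = B 0 := by
      ext j; simp [R12, Matrix.mul_apply, Fin.sum_univ_three]
    simp [this, h1]
  · have : (R12 * B) 1 = (√2)⁻¹ • (B 1 - B 2) := by
      ext j; simp [R12, Matrix.mul_apply, Fin.sum_univ_three]; ring
    simp [this, hp.smul, abs_of_pos hs, hd]
  · have : (R12 * B) 2 = (√2)⁻¹ • (B 1 + B 2) := by
      ext j; simp [R12, Matrix.mul_apply, Fin.sum_univ_three]; ring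
    simp [this, hp.smul, abs_of_pos hs, hc, -smul_add]

end

/-! ### A closed monoid containing the two rotations is transitive on the sphere -/

/-- Modulo `√2`, the first column of `(2 R12 R01) ^ n` is `(0, 1, 1)`: it has entries in `ℤ[√2]`, and
`m + k √2` is divisible by `√2` exactly when `m` is even. -/
theorem pow_col (n : ℕ) (hn : 1 ≤ n) : ∃ a b c d e f : ℤ,
    2 ^ n * ((R12 * R01) ^ n) 0 0 = 2 * a + b * √2 ∧
    2 ^ n * ((R12 * R01) ^ n) 1 0 = 2 * c + 1 + d * √2 ∧
    2 ^ n * ((R12 * R01) ^ n) 2 0 = 2 * e + 1 + f * √2 := by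
  have h2 : √2 * √2 = 2 := by norm_num
  have hs : (√2)⁻¹ = √2 / 2 := by
    rw [inv_eq_iff_eq_inv]; field_simp; linarith
  induction n, hn using Nat.le_induction with
  | base =>
    refine ⟨0, 1, 0, 0, 0, 0, ?_, ?_, ?_⟩ <;>
      simp [R01, R12, hs] <;> linarith
  | succ n hn ih =>
    obtain ⟨a, b, c, d, e, f, h0, h1, h3⟩ := ih
    refine ⟨b - d, 2 * a - 2 * c - 1, a + c - f, b + d - 2 * e - 1, a + c + f,
      b + d + 2 * e + 1, ?_, ?_, ?_⟩
    · rw [pow_succ' (R12 * R01), Matrix.mul_apply, Fin.sum_univ_three]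
      simp [R01, R12, Matrix.mul_apply, Fin.sum_univ_three, hs] at h0 h1 h3 ⊢
      linear_combination √2 * h0 - √2 * h1 + (b - d : ℝ) * h2
    · rw [pow_succ' (R12 * R01), Matrix.mul_apply, Fin.sum_univ_three]
      simp [R01, R12, Matrix.mul_apply, Fin.sum_univ_three, hs] at h0 h1 h3 ⊢
      generalize ((!![1, 0, 0; 0, √2 / 2, -(√2 / 2); 0, √2 / 2, √2 / 2] *
        !![√2 / 2, -(√2 / 2), 0; √2 / 2, √2 / 2, 0; 0, 0, 1]) ^ n : Matrix (Fin 3) (Fin 3) ℝ) = G at *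
      linear_combination √2 * √2 / 2 * h0 + √2 * √2 / 2 * h1 - √2 * h3 + ((2 * a + b * √2 + 2 * c + 1 + d * √2) / 2 - f) * h2
    · rw [pow_succ' (R12 * R01), Matrix.mul_apply, Fin.sum_univ_three]
      simp [R01, R12, Matrix.mul_apply, Fin.sum_univ_three, hs] at h0 h1 h3 ⊢
      linear_combination √2 * √2 / 2 * h0 + √2 * √2 / 2 * h1 + √2 * h3 + ((2 * a + b * √2 + 2 * c + 1 + d * √2) / 2 + f) * h2

theorem pow_ne_one (n : ℕ) (hn : 1 ≤ n) : (R12 * R01) ^ n ≠ 1 := by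
  intro h
  obtain ⟨-, -, c, d, -, -, -, h1, -⟩ := pow_col n hn
  rw [h] at h1
  simp at h1
  have h2 : √2 * √2 = 2 := by norm_num
  have : ((2 * c + 1) * (2 * c + 1) : ℝ) = 2 * (d * d) := by
    linear_combination (d * √2 - (2 * c + 1)) * h1 + (d * d : ℝ) * h2
  have h3 : (2 * c + 1) * (2 * c + 1) = 2 * (d * d) := by exact_mod_cast this
  -- An odd square is not even.
  have h4 : 2 * (2 * (c * c) + 2 * c) + 1 = 2 * (d * d) := by linarith
  omega

section
variable {S : Submonoid (Matrix (Fin 3) (Fin 3) ℝ)}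

theorem isCompact_of_orth (hcl : IsClosed (S : Set (Matrix (Fin 3) (Fin 3) ℝ)))
    (horth : ∀ h ∈ S, h * hᵀ = 1) : IsCompact (S : Set (Matrix (Fin 3) (Fin 3) ℝ)) := by
  have hK : IsCompact {h : Matrix (Fin 3) (Fin 3) ℝ | ∀ i, h i ∈ {v : Fin 3 → ℝ | ∀ j, v j ∈ Set.Icc (-1 : ℝ) 1}} :=
    isCompact_pi_infinite fun _ => isCompact_pi_infinite fun _ => isCompact_Icc
  refine hK.of_isClosed_subset hcl fun h hh i j => ?_
  have h1 := congrFun (congrFun (horth h hh) i) i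
  rw [Matrix.mul_apply, Matrix.one_apply_eq] at h1
  have h2 : h i j * hᵀ j i ≤ 1 := h1 ▸ Finset.single_le_sum (f := fun j => h i j * hᵀ j i)
    (fun k _ => mul_self_nonneg (h i k)) (Finset.mem_univ j)
  exact abs_le.1 (abs_le_one_iff_mul_self_le_one.2 h2)

/-- The powers of `R12 * R01` come arbitrarily close to the identity without reaching it. -/
theorem exists_tendsto_one (hcl : IsClosed (S : Set (Matrix (Fin 3) (Fin 3) ℝ)))
    (horth : ∀ h ∈ S, h * hᵀ = 1) (h01 : R01 ∈ S) (h12 : R12 ∈ S) :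
    ∃ h : ℕ → Matrix (Fin 3) (Fin 3) ℝ, (∀ n, h n ∈ S) ∧ (∀ n, h n ≠ 1) ∧
      Tendsto h atTop (𝓝 1) := by
  have hg : R12 * R01 ∈ S := S.mul_mem h12 h01
  have : FirstCountableTopology (Matrix (Fin 3) (Fin 3) ℝ) :=
    inferInstanceAs (FirstCountableTopology (Fin 3 → Fin 3 → ℝ))
  obtain ⟨a, ha, φ, hφ, hlim⟩ := (isCompact_of_orth hcl horth).tendsto_subseq
    (x := fun n => (R12 * R01) ^ n) (fun n => S.pow_mem hg n)
  refine ⟨fun n => (R12 * R01) ^ (φ (n + 1) - φ n), fun n => S.pow_mem hg _,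
    fun n => pow_ne_one _ (Nat.sub_pos_of_lt (hφ n.lt_succ_self)), ?_⟩
  -- Elements of `S` are orthogonal, so quotients of successive powers of a convergent
  -- subsequence tend to `1`.
  have e : ∀ n, (R12 * R01) ^ (φ (n + 1) - φ n)
      = ((R12 * R01) ^ φ n)ᵀ * (R12 * R01) ^ φ (n + 1) := by
    intro n
    have h1 := mul_eq_one_comm.1 (horth _ (S.pow_mem hg (φ n)))
    conv_rhs => rw [← Nat.add_sub_cancel' (hφ n.lt_succ_self).le, pow_add, ← mul_assoc, h1, one_mul]
  simp_rw [e]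
  rw [← mul_eq_one_comm.1 (horth a ha)]
  have ht : Continuous fun m : Matrix (Fin 3) (Fin 3) ℝ => mᵀ := by fun_prop
  exact ((ht.tendsto a).comp hlim).mul (hlim.comp (tendsto_add_atTop_nat 1))

open scoped Matrix.Norms.Elementwise in
/-- A nonzero skew-symmetric direction `N` tangent to `S` at the identity: a linear functional of
`h ∈ S` that is maximal at `h = 1` is nonpositive on `N`. -/
theorem exists_tangent (hcl : IsClosed (S : Set (Matrix (Fin 3) (Fin 3) ℝ)))
    (horth : ∀ h ∈ S, h * hᵀ = 1) (h01 : R01 ∈ S) (h12 : R12 ∈ S) :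
    ∃ N : Matrix (Fin 3) (Fin 3) ℝ, N ≠ 0 ∧ Nᵀ = -N ∧
      ∀ x y : Fin 3 → ℝ, (∀ h ∈ S, (x ᵥ* h) ⬝ᵥ y ≤ x ⬝ᵥ y) → (x ᵥ* N) ⬝ᵥ y ≤ 0 := by
  obtain ⟨h, hS, hne, hlim⟩ := exists_tendsto_one hcl horth h01 h12
  have hE : ∀ n, 0 < ‖h n - 1‖ := fun n => norm_pos_iff.2 (sub_ne_zero.2 (hne n))
  have hE0 : Tendsto (fun n => h n - 1) atTop (𝓝 0) := by
    simpa using hlim.sub_const 1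
  obtain ⟨N, hN, φ, hφ, hNlim⟩ :=
    (isCompact_sphere (0 : Matrix (Fin 3) (Fin 3) ℝ) 1).tendsto_subseq
    (x := fun n => ‖h n - 1‖⁻¹ • (h n - 1)) (fun n => by
      rw [mem_sphere_zero_iff_norm, norm_smul, norm_inv, norm_norm, inv_mul_cancel₀ (hE n).ne'])
  have hN1 : ‖N‖ = 1 := mem_sphere_zero_iff_norm.1 hN
  have ht : Continuous fun m : Matrix (Fin 3) (Fin 3) ℝ => mᵀ := by fun_prop
  have hm : Continuous fun q : Matrix (Fin 3) (Fin 3) ℝ × Matrix (Fin 3) (Fin 3) ℝ =>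
      q.1 * q.2ᵀ := continuous_fst.matrix_mul continuous_snd.matrix_transpose
  refine ⟨N, fun h0 => by simp [h0] at hN1, ?_, fun x y hxy => ?_⟩
  · -- To first order, `h * hᵀ = 1` says that `h - 1` is skew-symmetric.
    have key : ∀ n, ‖h n - 1‖⁻¹ • (h n - 1) + (‖h n - 1‖⁻¹ • (h n - 1))ᵀ
        = -((‖h n - 1‖⁻¹ • (h n - 1)) * (h n - 1)ᵀ) := by
      intro n
      have h1 := horth _ (hS n)
      have h2 : (h n - 1) + (h n - 1)ᵀ = -((h n - 1) * (h n - 1)ᵀ) := by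
        rw [Matrix.transpose_sub, Matrix.transpose_one, sub_mul, mul_sub, mul_sub, h1]
        simp only [mul_one, one_mul]
        abel
      rw [Matrix.transpose_smul, ← smul_add, h2, Matrix.smul_mul, smul_neg]
    have l1 : Tendsto (fun n => ‖h (φ n) - 1‖⁻¹ • (h (φ n) - 1) +
        (‖h (φ n) - 1‖⁻¹ • (h (φ n) - 1))ᵀ) atTop (𝓝 (N + Nᵀ)) :=
      hNlim.add ((ht.tendsto N).comp hNlim)
    have l2 : Tendsto (fun n => -((‖h (φ n) - 1‖⁻¹ • (h (φ n) - 1)) * (h (φ n) - 1)ᵀ)) atTop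
        (𝓝 (-(N * 0ᵀ))) :=
      ((hm.tendsto (N, 0)).comp (hNlim.prodMk_nhds (hE0.comp hφ.tendsto_atTop))).neg
    simp_rw [key] at l1
    have := tendsto_nhds_unique l1 l2
    simp only [Matrix.transpose_zero, mul_zero, neg_zero] at this
    exact eq_neg_of_add_eq_zero_right this
  · have hc : Continuous fun m : Matrix (Fin 3) (Fin 3) ℝ => (x ᵥ* m) ⬝ᵥ y := by fun_prop
    refine le_of_tendsto' ((hc.tendsto N).comp hNlim) fun n => ?_
    simp only [Function.comp, Matrix.vecMul_smul, smul_dotProduct, Matrix.vecMul_sub,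
      sub_dotProduct, Matrix.vecMul_one, smul_eq_mul]
    exact mul_nonpos_of_nonneg_of_nonpos (inv_nonneg.2 (norm_nonneg _))
      (sub_nonpos.2 (hxy _ (hS _)))
end

section
variable {S : Submonoid (Matrix (Fin 3) (Fin 3) ℝ)}

theorem R01_sq : R01 ^ 2 = !![0, -1, 0; 1, 0, 0; 0, 0, 1] := by
  have h : (√2)⁻¹ * (√2)⁻¹ = (1 / 2 : ℝ) := by rw [← mul_inv]; norm_num
  ext i j
  fin_cases i <;> fin_cases j <;>
    simp [R01, pow_two, Matrix.mul_apply, Fin.sum_univ_three, h] <;> norm_num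

theorem R12_sq : R12 ^ 2 = !![1, 0, 0; 0, 0, -1; 0, 1, 0] := by
  have h : (√2)⁻¹ * (√2)⁻¹ = (1 / 2 : ℝ) := by rw [← mul_inv]; norm_num
  ext i j
  fin_cases i <;> fin_cases j <;>
    simp [R12, pow_two, Matrix.mul_apply, Fin.sum_univ_three, h] <;> norm_num

/-- `S` contains the half-turns about the coordinate axes. -/
theorem diag_mem (h01 : R01 ∈ S) (h12 : R12 ∈ S) :
    (!![-1, 0, 0; 0, -1, 0; 0, 0, 1] : Matrix (Fin 3) (Fin 3) ℝ) ∈ S ∧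
    (!![1, 0, 0; 0, -1, 0; 0, 0, -1] : Matrix (Fin 3) (Fin 3) ℝ) ∈ S ∧
    (!![-1, 0, 0; 0, 1, 0; 0, 0, -1] : Matrix (Fin 3) (Fin 3) ℝ) ∈ S := by
  have a := S.pow_mem h01 2
  have b := S.pow_mem h12 2
  rw [R01_sq] at a
  rw [R12_sq] at b
  have a' := S.mul_mem a a
  have b' := S.mul_mem b b
  have c' := S.mul_mem a' b'
  refine ⟨by convert a' using 1; simp, by convert b' using 1; simp, by convert c' using 1; simp⟩

/-- `S` contains the cyclic permutations of the coordinates. -/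
theorem cyc_mem (h01 : R01 ∈ S) (h12 : R12 ∈ S) :
    (!![0, 0, 1; 1, 0, 0; 0, 1, 0] : Matrix (Fin 3) (Fin 3) ℝ) ∈ S ∧
    (!![0, 1, 0; 0, 0, 1; 1, 0, 0] : Matrix (Fin 3) (Fin 3) ℝ) ∈ S := by
  have a := S.pow_mem h01 2
  have b := S.pow_mem h12 2
  rw [R01_sq] at a
  rw [R12_sq] at b
  have h : (!![0, 0, 1; 1, 0, 0; 0, 1, 0] : Matrix (Fin 3) (Fin 3) ℝ) ∈ S := by
    convert S.mul_mem a b using 1; simp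
  refine ⟨h, ?_⟩
  convert S.mul_mem h h using 1; simp

/-- If the first-order condition `v k N k⁻¹ w ≤ 0` holds for all invertible `k ∈ S`, where `N ≠ 0` is
skew-symmetric, then the cross product of `v` and `w` vanishes. -/
theorem cross_eq_zero {N : Matrix (Fin 3) (Fin 3) ℝ} (hN : N ≠ 0) (hskew : Nᵀ = -N)
    (h01 : R01 ∈ S) (h12 : R12 ∈ S) {v w : Fin 3 → ℝ}
    (hk : ∀ k ∈ S, ∀ k' ∈ S, k * k' = 1 → (v ᵥ* k ᵥ* N) ⬝ᵥ (k' *ᵥ w) ≤ 0) :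
    v 0 * w 1 = v 1 * w 0 ∧ v 0 * w 2 = v 2 * w 0 ∧ v 1 * w 2 = v 2 * w 1 := by
  have sk : ∀ i j, N j i = -N i j := fun i j => congrFun (congrFun hskew i) j
  have d0 := sk 0 0
  have d1 := sk 1 1
  have d2 := sk 2 2
  have z0 : N 0 0 = 0 := by linarith
  have z1 : N 1 1 = 0 := by linarith
  have z2 : N 2 2 = 0 := by linarith
  obtain ⟨m1, m2, m3⟩ := diag_mem h01 h12
  obtain ⟨c1, c2⟩ := cyc_mem h01 h12
  -- Conjugating by the identity and the three half-turns gives four nonpositive numbers with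
  -- sum zero, so all of them vanish, and so does each of the three terms they are made of.
  have key : ∀ k ∈ S, ∀ k' ∈ S, k * k' = 1 →
      N 0 1 * ((v ᵥ* k) 0 * (k' *ᵥ w) 1 - (v ᵥ* k) 1 * (k' *ᵥ w) 0) = 0 ∧
      N 0 2 * ((v ᵥ* k) 0 * (k' *ᵥ w) 2 - (v ᵥ* k) 2 * (k' *ᵥ w) 0) = 0 ∧
      N 1 2 * ((v ᵥ* k) 1 * (k' *ᵥ w) 2 - (v ᵥ* k) 2 * (k' *ᵥ w) 1) = 0 := by
    intro k hkS k' hkS' hkk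
    have e : ∀ d ∈ S, d * d = 1 → (v ᵥ* k ᵥ* d ᵥ* N) ⬝ᵥ (d *ᵥ (k' *ᵥ w)) ≤ 0 := by
      intro d hd hdd
      have := hk (k * d) (S.mul_mem hkS hd) (d * k') (S.mul_mem hd hkS')
        (by rw [mul_assoc, ← mul_assoc d, hdd, one_mul, hkk])
      rwa [← Matrix.vecMul_vecMul, ← Matrix.mulVec_mulVec] at this
    have e0 := e 1 S.one_mem (one_mul _)
    have e1 := e _ m1 (by ext i j; fin_cases i <;> fin_cases j <;> simp)
    have e2 := e _ m2 (by ext i j; fin_cases i <;> fin_cases j <;> simp)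
    have e3 := e _ m3 (by ext i j; fin_cases i <;> fin_cases j <;> simp)
    generalize v ᵥ* k = a at *
    generalize k' *ᵥ w = b at *
    simp [Matrix.vecMul, Matrix.mulVec, dotProduct, Fin.sum_univ_three, z0, z1, z2, sk 0 1,
      sk 0 2, sk 1 2] at e0 e1 e2 e3
    refine ⟨?_, ?_, ?_⟩ <;> linarith
  -- Cyclic permutations combine a single nonzero entry of `N` with all entries of `v × w`.
  have k0 := key 1 S.one_mem 1 S.one_mem (one_mul _)
  have k1 := key _ c1 _ c2 (by ext i j; fin_cases i <;> fin_cases j <;> simp)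
  have k2 := key _ c2 _ c1 (by ext i j; fin_cases i <;> fin_cases j <;> simp)
  simp [Matrix.vecMul, Matrix.mulVec, dotProduct, Fin.sum_univ_three, sub_eq_zero] at k0 k1 k2
  have hnz : N 0 1 ≠ 0 ∨ N 0 2 ≠ 0 ∨ N 1 2 ≠ 0 := by
    by_contra! hc
    obtain ⟨x, y, z⟩ := hc
    refine hN ?_
    ext i j
    fin_cases i <;> fin_cases j <;> simp [z0, z1, z2, sk 0 1, sk 0 2, sk 1 2, x, y, z]
  rcases hnz with h | h | h <;> simp only [h, false_or] at k0 k1 k2 <;>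
    refine ⟨?_, ?_, ?_⟩ <;> linarith [k0.1, k0.2.1, k0.2.2, k1.1, k1.2.1, k1.2.2, k2.1, k2.2.1, k2.2.2]

/-- Every Euclidean unit vector `w` is the first row of a member of `S`, namely of one whose first row
has maximal inner product with `w`. -/
theorem exists_row_eq (hcl : IsClosed (S : Set (Matrix (Fin 3) (Fin 3) ℝ)))
    (horth : ∀ h ∈ S, h * hᵀ = 1) (h01 : R01 ∈ S) (h12 : R12 ∈ S)
    (w : Fin 3 → ℝ) (hw : w 0 ^ 2 + w 1 ^ 2 + w 2 ^ 2 = 1) : ∃ g ∈ S, g 0 = w := by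
  obtain ⟨N, hN, hskew, hlim⟩ := exists_tangent hcl horth h01 h12
  have hc : Continuous fun m : Matrix (Fin 3) (Fin 3) ℝ => m 0 ⬝ᵥ w := by fun_prop
  obtain ⟨g, hg, hmax⟩ := (isCompact_of_orth hcl horth).exists_isMaxOn ⟨1, S.one_mem⟩
    hc.continuousOn
  have hmax' : ∀ h ∈ S, (g 0 ᵥ* h) ⬝ᵥ w ≤ g 0 ⬝ᵥ w := fun h hh => by
    have := hmax (S.mul_mem hg hh)
    simpa [Matrix.mul_apply_eq_vecMul] using this
  have cross := cross_eq_zero (v := g 0) (w := w) hN hskew h01 h12 (fun k hk k' hk' hkk =>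
    hlim _ _ fun h hh => by
      have := hmax' (k * h * k') (S.mul_mem (S.mul_mem hk hh) hk')
      rw [← Matrix.vecMul_vecMul, ← Matrix.vecMul_vecMul, ← Matrix.dotProduct_mulVec] at this
      refine this.trans_eq ?_
      rw [Matrix.dotProduct_mulVec, Matrix.vecMul_vecMul, hkk, Matrix.vecMul_one])
  have hv := congrFun (congrFun (horth g hg) 0) 0
  have hw0 := hmax S.one_mem
  have hw1 := hmax (diag_mem h01 h12).1
  simp [Matrix.mul_apply, dotProduct, Fin.sum_univ_three] at hv hw0 hw1
  obtain ⟨x, y, z⟩ := cross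
  set t := g 0 0 * w 0 + g 0 1 * w 1 + g 0 2 * w 2 with ht
  have r0 : g 0 0 = t * w 0 := by
    rw [ht]; linear_combination (-g 0 0) * hw + w 1 * x + w 2 * y
  have r1 : g 0 1 = t * w 1 := by
    rw [ht]; linear_combination (-g 0 1) * hw - w 0 * x + w 2 * z
  have r2 : g 0 2 = t * w 2 := by
    rw [ht]; linear_combination (-g 0 2) * hw - w 0 * y - w 1 * z
  have t2 : t ^ 2 = 1 := by
    rw [r0, r1, r2] at hv
    linear_combination hv - t ^ 2 * hw
  -- `t = -1` is excluded: `S` has members with first rows `e₀` and `-e₀`, so the maximum is `≥ 0`.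
  have t1 : t = 1 := by nlinarith
  refine ⟨g, hg, ?_⟩
  ext i
  fin_cases i
  · simpa [t1] using r0
  · simpa [t1] using r1
  · simpa [t1] using r2
end

/-! ### Extremal norms are Euclidean -/

/-- The monoid of orthogonal matrices whose left multiplication preserves the maximal frames. -/
def Stab (p : (Fin 3 → ℝ) → ℝ) : Submonoid (Matrix (Fin 3) (Fin 3) ℝ) where
  carrier := {h | h * hᵀ = 1 ∧ ∀ B ∈ Frames p, h * B ∈ Frames p}
  one_mem' := ⟨by simp, fun B hB => by rwa [one_mul]⟩
  mul_mem' := by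
    rintro g h ⟨g1, g2⟩ ⟨h1, h2⟩
    refine ⟨?_, fun B hB => by rw [mul_assoc]; exact g2 _ (h2 _ hB)⟩
    rw [Matrix.transpose_mul, mul_assoc, ← mul_assoc h, h1, one_mul, g1]

section
variable {p : (Fin 3 → ℝ) → ℝ}

theorem ExtremalNorm.isClosed_stab (hp : ExtremalNorm p) :
    IsClosed (Stab p : Set (Matrix (Fin 3) (Fin 3) ℝ)) := by
  have hF : IsClosed (Frames p) := by
    have h1 : IsClosed {B : Matrix (Fin 3) (Fin 3) ℝ | ∀ i, p (B i) ≤ 1} := by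
      simp only [Set.ofPred_forall]
      exact isClosed_iInter fun i => isClosed_le (hp.cont.comp (continuous_apply i)) continuous_const
    exact h1.inter (isClosed_eq (by fun_prop) continuous_const)
  have h2 : IsClosed {h : Matrix (Fin 3) (Fin 3) ℝ | ∀ B ∈ Frames p, h * B ∈ Frames p} := by
    simp only [Set.ofPred_forall]
    exact isClosed_iInter fun B => isClosed_iInter fun _ => hF.preimage (by fun_prop)
  exact (isClosed_eq (by fun_prop) continuous_const).inter h2

theorem orth_R : R01 * R01ᵀ = 1 ∧ R12 * R12ᵀ = 1 := by
  have h : (√2)⁻¹ * (√2)⁻¹ = (1 / 2 : ℝ) := by rw [← mul_inv]; norm_num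
  constructor <;> ext i j <;> fin_cases i <;> fin_cases j <;>
    simp [R01, R12, Matrix.mul_apply, Fin.sum_univ_three, h] <;> norm_num

theorem ExtremalNorm.eq_one (hp : ExtremalNorm p) {w : Fin 3 → ℝ} (hw : w 0 ^ 2 + w 1 ^ 2 + w 2 ^ 2 = 1) :
    p w = 1 := by
  obtain ⟨g, hg, rfl⟩ := exists_row_eq hp.isClosed_stab (fun h hh => hh.1)
    ⟨orth_R.1, fun B hB => hp.R01_mul hB⟩ ⟨orth_R.2, fun B hB => hp.R12_mul hB⟩ w hw
  have h1 : (1 : Matrix (Fin 3) (Fin 3) ℝ) ∈ Frames p := ⟨hp.basis, Matrix.det_one⟩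
  have := hg.2 1 h1
  rw [mul_one] at this
  exact hp.frame_eq_one this 0

theorem ExtremalNorm.sq_eq (hp : ExtremalNorm p) (v : Fin 3 → ℝ) : p v ^ 2 = v 0 ^ 2 + v 1 ^ 2 + v 2 ^ 2 := by
  by_cases hv : v = 0
  · subst hv
    have := hp.smul 0 0
    simp at this
    simp [this]
  have hpos : 0 < v 0 ^ 2 + v 1 ^ 2 + v 2 ^ 2 := by
    by_contra! hle
    refine hv ?_
    ext i
    have h0 := sq_nonneg (v 0)
    have h1 := sq_nonneg (v 1)
    have h2 := sq_nonneg (v 2)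
    fin_cases i <;> refine pow_eq_zero_iff (two_ne_zero) |>.1 ?_ <;> simp only [Fin.zero_eta, Fin.mk_one, Fin.reduceFinMk] <;> linarith
  set r := √(v 0 ^ 2 + v 1 ^ 2 + v 2 ^ 2) with hr
  have hr2 : r ^ 2 = v 0 ^ 2 + v 1 ^ 2 + v 2 ^ 2 := Real.sq_sqrt hpos.le
  have hr0 : 0 < r := Real.sqrt_pos.2 hpos
  have h := hp.eq_one (w := r⁻¹ • v) (by
    simp only [Pi.smul_apply, smul_eq_mul, mul_pow, ← mul_add, ← hr2]
    field_simp)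
  rw [hp.smul, abs_of_pos (inv_pos.2 hr0), inv_mul_eq_one₀ hr0.ne'] at h
  rw [← h, hr2]

end

/-! ### Reduction to coordinates -/

/-- The basis chosen in the range of `L₀` is a frame in the unit ball of maximal determinant. -/
theorem exists_extremalNorm {X : Type*} [NormedAddCommGroup X] [NormedSpace ℝ X]
    (hT : ∀ u v : X, ‖u‖ = 1 → ‖v‖ = 1 → ‖u + v‖ * ‖u - v‖ ≤ 2)
    (L₀ : (Fin 3 → ℝ) →ₗ[ℝ] X) (hinj : Function.Injective L₀) :
    ∃ L : (Fin 3 → ℝ) →ₗ[ℝ] X, LinearMap.range L₀ ≤ LinearMap.range L ∧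
      ExtremalNorm (fun v => ‖L v‖) := by
  have hcont : Continuous L₀ := L₀.continuous_of_finiteDimensional
  obtain ⟨K, hK, hanti⟩ := L₀.exists_antilipschitzWith (LinearMap.ker_eq_bot.2 hinj)
  let C : Set (Matrix (Fin 3) (Fin 3) ℝ) := {B | ∀ i, B i ∈ {v | ‖L₀ v‖ ≤ 1}}
  have hball : IsCompact {v | ‖L₀ v‖ ≤ 1} := by
    refine (isCompact_closedBall (0 : Fin 3 → ℝ) K).of_isClosed_subset
      (isClosed_le hcont.norm continuous_const) fun v hv => ?_
    have := hanti.le_mul_dist v 0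
    rw [map_zero, dist_zero_right, dist_zero_right] at this
    rw [mem_closedBall_zero_iff]
    exact this.trans (mul_le_of_le_one_right K.2 hv)
  have hC : IsCompact C := isCompact_pi_infinite fun _ => hball
  have hdet : Continuous fun B : Matrix (Fin 3) (Fin 3) ℝ => B.det := by fun_prop
  obtain ⟨A, hAC, hAmax⟩ := hC.exists_isMaxOn ⟨0, fun i => by
      have h0 : (0 : Matrix (Fin 3) (Fin 3) ℝ) i = 0 := rfl
      simp [h0]⟩
    hdet.continuousOn
  have hApos : 0 < A.det := by
    -- A small positive multiple of the identity lies in `C`.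
    have hc : Tendsto (fun t : ℝ => fun i : Fin 3 => ‖L₀ (t • (1 : Matrix (Fin 3) (Fin 3) ℝ) i)‖)
        (𝓝[>] 0) (𝓝 0) := by
      have : Continuous (fun t : ℝ => fun i : Fin 3 => ‖L₀ (t • (1 : Matrix (Fin 3) (Fin 3) ℝ) i)‖) := by
        fun_prop
      have h := this.tendsto 0
      simp only [zero_smul, map_zero, norm_zero] at h
      exact h.mono_left nhdsWithin_le_nhds
    have hev : ∀ᶠ t : ℝ in 𝓝[>] 0, ∀ i : Fin 3,
        ‖L₀ (t • (1 : Matrix (Fin 3) (Fin 3) ℝ) i)‖ < 1 :=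
      eventually_all.2 fun i => ((tendsto_pi_nhds.1 hc) i).eventually_lt_const one_pos
    obtain ⟨t, ht, ht0⟩ := (hev.and self_mem_nhdsWithin).exists
    have h1 : (t • (1 : Matrix (Fin 3) (Fin 3) ℝ)).det ≤ A.det := hAmax fun i => (ht i).le
    have ht0' : 0 < t := ht0
    rw [Matrix.det_smul, Matrix.det_one] at h1
    exact lt_of_lt_of_le (by positivity) h1
  have hAu : IsUnit A := (Matrix.isUnit_iff_isUnit_det A).2 hApos.ne'.isUnit
  refine ⟨L₀ ∘ₗ A.vecMulLinear, ?_, ?_⟩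
  · rintro _ ⟨v, rfl⟩
    obtain ⟨u, hu⟩ := Matrix.vecMul_surjective_iff_isUnit.2 hAu v
    exact ⟨u, by simp [hu]⟩
  have hLinj : Function.Injective (L₀ ∘ₗ A.vecMulLinear) :=
    hinj.comp (Matrix.vecMul_injective_iff_isUnit.2 hAu)
  have hrow : ∀ (B : Matrix (Fin 3) (Fin 3) ℝ) i,
      (L₀ ∘ₗ A.vecMulLinear) (B i) = L₀ ((B * A) i) := fun B i => by
    rw [Matrix.mul_apply_eq_vecMul]; rfl
  generalize hL : L₀ ∘ₗ A.vecMulLinear = L at *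
  refine ⟨L.continuous_of_finiteDimensional.norm, fun a v => by simp [norm_smul],
    fun v => norm_nonneg _, fun v hv => norm_pos_iff.2 ((map_ne_zero_iff L hLinj).2 hv),
    fun u v hu hv => by simpa using hT _ _ hu hv, fun i => ?_, fun B hB => ?_⟩
  · have h1 := hrow 1 i
    rw [one_mul] at h1
    exact (congrArg norm h1).trans_le (hAC i)
  · have h1 : (B * A).det ≤ A.det := hAmax fun i => by
      have := hB i
      simp only [hrow] at this
      exact this
    rw [Matrix.det_mul] at h1
    exact (mul_le_iff_le_one_left hApos).1 h1

theorem T2.mul_le {X : Type*} [NormedAddCommGroup X] [NormedSpace ℝ X]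
    (h : T2 X 1 1 = √2) (u v : X) (hu : ‖u‖ = 1) (hv : ‖v‖ = 1) :
    ‖u + v‖ * ‖u - v‖ ≤ 2 := by
  -- The set is bounded, so its `sSup` is a genuine supremum.
  have hbdd : BddAbove {r : ℝ | ∃ x y : X, ‖x‖ = 1 ∧ ‖y‖ = 1 ∧
      r = √(‖(1 : ℝ) • x + (1 : ℝ) • y‖ * ‖(1 : ℝ) • x - (1 : ℝ) • y‖)} := by
    refine ⟨√(2 * 2), ?_⟩
    rintro _ ⟨x, y, hx, hy, rfl⟩
    rw [one_smul, one_smul]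
    refine Real.sqrt_le_sqrt (mul_le_mul ?_ ?_ (norm_nonneg _) zero_le_two)
    · exact (norm_add_le x y).trans (by rw [hx, hy]; norm_num)
    · exact (norm_sub_le x y).trans (by rw [hx, hy]; norm_num)
  have h1 := le_csSup hbdd ⟨u, v, hu, hv, rfl⟩
  rw [one_smul, one_smul] at h1
  exact (Real.sqrt_le_sqrt_iff zero_le_two).1 (h1.trans h.le)

/-- If `X` is a real Banach space with `dim X ≥ 3` and `T₂(1,1,X) = √2`,
then the norm of `X` satisfies the parallelogram identity, i.e. `X` is a Hilbert space. -/
theorem stmt9 {X : Type*} [NormedAddCommGroup X] [NormedSpace ℝ X] [CompleteSpace X]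
    (hdim : 3 ≤ Module.rank ℝ X) (h : T2 X 1 1 = Real.sqrt 2) :
    ∀ x y : X, ‖x + y‖ ^ 2 + ‖x - y‖ ^ 2 = 2 * ‖x‖ ^ 2 + 2 * ‖y‖ ^ 2 := by
  intro x y
  by_cases hx : x = 0
  · subst hx; simp; ring
  by_cases hxy : ∃ a : ℝ, a • x = y
  · obtain ⟨a, rfl⟩ := hxy
    have e1 : x + a • x = (1 + a) • x := by module
    have e2 : x - a • x = (1 - a) • x := by module
    rw [e1, e2]
    simp only [norm_smul, mul_pow, Real.norm_eq_abs, sq_abs]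
    ring
  push Not at hxy
  have hli := (LinearIndependent.pair_iff' hx).2 hxy
  obtain ⟨z, hz⟩ := exists_linearIndependent_snoc_of_lt_rank hli
    (lt_of_lt_of_le (by norm_num) hdim)
  obtain ⟨L, hrange, hgood⟩ := exists_extremalNorm (T2.mul_le h)
    (Fintype.linearCombination ℝ (Fin.snoc ![x, y] z : Fin 3 → X))
    (hz.fintypeLinearCombination_injective)
  obtain ⟨u, rfl⟩ : x ∈ LinearMap.range L := hrange ⟨Pi.single 0 1, by
    rw [Fintype.linearCombination_apply_single, one_smul]; rfl⟩
  obtain ⟨v, rfl⟩ : y ∈ LinearMap.range L := hrange ⟨Pi.single 1 1, by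
    rw [Fintype.linearCombination_apply_single, one_smul]; rfl⟩
  have hs := hgood.sq_eq
  rw [← map_add, ← map_sub, hs, hs, hs, hs]
  simp only [Pi.add_apply, Pi.sub_apply]
  ring
end

section
/- Let X be an infinite-dimensional real Banach space and let κ, τ > 0. Then √(κ² + τ²) ≤ T₂(κ,τ,X) ≤ κ + τ. -/
/-- A nonzero bounded alternating form `f ∧ g`: `f` is a nonzero functional, and `g` is a functional
not vanishing at some vector of `ker f`, which is nontrivial because `X` is infinite-dimensional. -/
lemma exists_wedge_ne_zero {X : Type*} [NormedAddCommGroup X] [NormedSpace ℝ X]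
    (hinf : ¬ FiniteDimensional ℝ X) :
    ∃ f g : X →L[ℝ] ℝ, f.smulRight g - g.smulRight f ≠ 0 := by
  have hnt : Nontrivial X := by
    by_contra h
    rw [not_nontrivial_iff_subsingleton] at h
    exact hinf inferInstance
  obtain ⟨x, hx⟩ := exists_ne (0 : X)
  obtain ⟨f, -, hf⟩ := exists_dual_vector ℝ x (norm_ne_zero_iff.2 hx)
  have hker : ∃ y : X, f y = 0 ∧ y ≠ 0 := by
    by_contra! h
    exact hinf (FiniteDimensional.of_injective (f : X →ₗ[ℝ] ℝ)
      ((injective_iff_map_eq_zero _).2 h))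
  obtain ⟨y, hfy, hy⟩ := hker
  obtain ⟨g, -, hg⟩ := exists_dual_vector ℝ y (norm_ne_zero_iff.2 hy)
  refine ⟨f, g, fun h => ?_⟩
  have h1 := congrArg (fun B : X →L[ℝ] X →L[ℝ] ℝ => B x y) h
  simp [hfy, hf, hg, hx, hy] at h1

/-- The triangle inequality bound; it also shows that the supremum defining `T2` is finite. -/
lemma sqrt_norm_mul_norm_le {X : Type*} [NormedAddCommGroup X] [NormedSpace ℝ X]
    {κ τ : ℝ} (hκ : 0 < κ) (hτ : 0 < τ) {x y : X} (hx : ‖x‖ = 1) (hy : ‖y‖ = 1) :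
    Real.sqrt (‖κ • x + τ • y‖ * ‖τ • x - κ • y‖) ≤ κ + τ := by
  have h1 : ‖κ • x + τ • y‖ ≤ κ + τ := by
    simpa [norm_smul, hx, hy, abs_of_pos hκ, abs_of_pos hτ] using norm_add_le (κ • x) (τ • y)
  have h2 : ‖τ • x - κ • y‖ ≤ κ + τ := by
    simpa [norm_smul, hx, hy, abs_of_pos hκ, abs_of_pos hτ, add_comm] using
      norm_sub_le (τ • x) (κ • y)
  rw [Real.sqrt_le_left (by positivity), sq]
  gcongr

/-- For an infinite-dimensional real Banach space `X` and `κ, τ > 0`,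
`√(κ² + τ²) ≤ T₂(κ,τ,X) ≤ κ + τ`. -/
theorem stmt10 {X : Type*} [NormedAddCommGroup X] [NormedSpace ℝ X] [CompleteSpace X]
    (hinf : ¬ FiniteDimensional ℝ X) (κ τ : ℝ) (hκ : 0 < κ) (hτ : 0 < τ) :
    Real.sqrt (κ ^ 2 + τ ^ 2) ≤ T2 X κ τ ∧ T2 X κ τ ≤ κ + τ := by
  constructor
  · have hle : ∀ x y : X, ‖x‖ = 1 → ‖y‖ = 1 →
        ‖κ • x + τ • y‖ * ‖τ • x - κ • y‖ ≤ T2 X κ τ ^ 2 := by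
      intro x y hx hy
      have h : Real.sqrt (‖κ • x + τ • y‖ * ‖τ • x - κ • y‖) ≤ T2 X κ τ := by
        refine le_csSup ⟨κ + τ, ?_⟩ ⟨x, y, hx, hy, rfl⟩
        rintro _ ⟨x, y, hx, hy, rfl⟩
        exact sqrt_norm_mul_norm_le hκ hτ hx hy
      exact (Real.sqrt_le_iff.1 h).2
    have hT0 : 0 ≤ T2 X κ τ := by
      apply Real.sSup_nonneg
      rintro _ ⟨x, y, -, -, rfl⟩
      exact Real.sqrt_nonneg _
    obtain ⟨f, g, hB⟩ := exists_wedge_ne_zero hinf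
    set B : X →L[ℝ] X →L[ℝ] ℝ := f.smulRight g - g.smulRight f with hBdef
    have hpos : 0 < ‖B‖ :=
      lt_of_le_of_ne (norm_nonneg B) fun h => hB (B.opNorm_zero_iff.1 h.symm)
    have hc : 0 < κ ^ 2 + τ ^ 2 := by positivity
    have hC : 0 ≤ ‖B‖ * T2 X κ τ ^ 2 / (κ ^ 2 + τ ^ 2) := by positivity
    have hbound : ‖B‖ ≤ ‖B‖ * T2 X κ τ ^ 2 / (κ ^ 2 + τ ^ 2) := by
      refine ContinuousLinearMap.opNorm_le_of_unit_norm hC fun x hx =>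
        ContinuousLinearMap.opNorm_le_of_unit_norm hC fun y hy => ?_
      have hdet : B (κ • x + τ • y) (τ • x - κ • y) = -((κ ^ 2 + τ ^ 2) * B x y) := by
        simp [hBdef]
        ring
      rw [le_div_iff₀ hc]
      calc ‖B x y‖ * (κ ^ 2 + τ ^ 2) = ‖B (κ • x + τ • y) (τ • x - κ • y)‖ := by
            rw [hdet, norm_neg, norm_mul, Real.norm_of_nonneg hc.le, mul_comm]
        _ ≤ ‖B‖ * ‖κ • x + τ • y‖ * ‖τ • x - κ • y‖ := B.le_opNorm₂ _ _
        _ ≤ ‖B‖ * T2 X κ τ ^ 2 := by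
            rw [mul_assoc]
            exact mul_le_mul_of_nonneg_left (hle x y hx hy) hpos.le
    rw [le_div_iff₀ hc] at hbound
    exact (Real.sqrt_le_left hT0).2 (le_of_mul_le_mul_left hbound hpos)
  -- `sSup ∅ = 0` is also at most `κ + τ`, so no unit vectors need to be exhibited.
  · apply Real.sSup_le _ (by positivity)
    rintro _ ⟨x, y, hx, hy, rfl⟩
    exact sqrt_norm_mul_norm_le hκ hτ hx hy
end

section
/- Let Y be a two-dimensional real normed space and let κ, τ > 0. Then there exist y₁, y₂ ∈ S(Y) such that ‖κy₁ + τy₂‖ = ‖κy₁ − τy₂‖ = √(κ² + τ²). -/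
/-!
Identify `Y` with `ℂ` by a real-linear isomorphism `e`, and write `u ∧ v` for the determinant form
`wedge`. Let `α` be (twice) the area swept out in the unit ball of `Y` by a direction; as a
function of a nonzero vector `v` it satisfies `dα = (v ∧ dv) / ‖v‖²`, so it is `C¹` however
irregular the norm is. For linearly independent `y₁, y₂` put `v± = κ y₁ ± τ y₂` and consider

  `energy = (κ² + τ²) (α(v₊) + α(v₋)) - 2 κ² α(y₁) - 2 τ² α(y₂)`.

The coefficients add up to zero, so the ambiguity of `α` by periods cancels once the four angles
are lifted consistently, and `energy` is a well-defined differentiable function of positively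
oriented pairs (`hasFDerivAt_energy`).

The set `configs` of positively oriented pairs of unit vectors with `‖v₊‖ = ‖v₋‖` is compact and
nonempty, so `energy` attains a maximum on it. At a point of `configs`, with `T = ‖v₊‖ = ‖v₋‖`,
the differential of `energy` is
`2 ((κ² + τ²) / T² - 1) (κ² y₁ ∧ dy₁ + τ² y₂ ∧ dy₂)`. By monotonicity of `‖κ x - τ y‖` as `y` runs
along the unit circle away from `x` (`norm_sub_mono`), the gap `‖v₊‖ - ‖v₋‖` increases with the
angle of `y₁` and decreases with the angle of `y₂`; hence the intermediate value theorem gives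
points of `configs` nearby with both vectors rotated weakly forward, and likewise weakly backward
(`exists_move`). Along such moves the bracket is positive, respectively negative, of first order,
so at the maximum `T² = κ² + τ²`.
-/

/-! ### Monotonicity of distances along the unit circle -/

/-- If `y` lies between `x` and `z` on the unit circle, then `y` is at least as close to `x` as
`z` is, also after scaling by `κ` and `τ`. -/
theorem norm_sub_mono {Y : Type*} [NormedAddCommGroup Y] [NormedSpace ℝ Y] {x y z : Y}
    (hx : ‖x‖ = 1) (hy : ‖y‖ = 1) (hz : ‖z‖ = 1) {a b : ℝ} (ha : 0 ≤ a) (hb : 0 ≤ b)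
    (hyab : y = a • x + b • z) {κ τ : ℝ} (hκ : 0 < κ) (hτ : 0 < τ) :
    ‖κ • x - τ • y‖ ≤ ‖κ • x - τ • z‖ := by
  have hab : 1 ≤ a + b := by
    have h := norm_add_le (a • x) (b • z)
    rw [← hyab, norm_smul, norm_smul, hx, hy, hz, Real.norm_of_nonneg ha,
      Real.norm_of_nonneg hb] at h
    linarith
  set M := ‖κ • x - τ • z‖ with hM
  have hM1 : κ - τ ≤ M := by
    have h := norm_sub_norm_le (κ • x) (τ • z)
    rw [norm_smul, norm_smul, hx, hz, Real.norm_of_nonneg hκ.le, Real.norm_of_nonneg hτ.le] at h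
    linarith
  rcases ha.eq_or_lt with rfl | ha
  · have hb1 : b = 1 := by
      have := hy
      rw [hyab, zero_smul, zero_add, norm_smul, hz, Real.norm_of_nonneg hb] at this
      linarith
    rw [hyab, hb1]; simp [hM]
  have hp : 0 < a * τ + κ * b := by positivity
  -- The line through `τ y` and `τ z` meets `κ x + ℝ y` in a point at distance
  -- `|κ (1 - b) - a τ| / a` from `κ x`, and `τ y` lies on the segment from that point to `τ z`.
  -- Convexity of the norm along this line therefore reduces the claim to a bound on that distance.
  have hQ : |κ * (1 - b) - a * τ| ≤ a * M := by
    rw [abs_le]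
    constructor
    · have key : (κ * b + a * τ) • z = κ • y - a • (κ • x - τ • z) := by
        rw [hyab]; module
      have h := norm_sub_le (κ • y) (a • (κ • x - τ • z))
      rw [← key, norm_smul, norm_smul, norm_smul, hz, hy, ← hM, Real.norm_of_nonneg hκ.le,
        Real.norm_of_nonneg ha.le, Real.norm_of_nonneg (by linarith)] at h
      linarith
    · nlinarith
  have key : (a * τ + κ * b) • (κ • x - τ • y) =
      (τ * (κ * (1 - b) - a * τ)) • y + (κ * b) • (κ • x - τ • z) := by
    have : (κ * τ * a) • x = (κ * τ) • y - (κ * τ * b) • z := by rw [hyab]; module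
    have e1 : (a * τ + κ * b) • (κ • x - τ • y) =
      (κ * τ * a) • x + (κ * b * κ) • x - ((a * τ + κ * b) * τ) • y := by module
    rw [e1, this]; module
  have h := norm_add_le ((τ * (κ * (1 - b) - a * τ)) • y) ((κ * b) • (κ • x - τ • z))
  rw [← key, norm_smul, norm_smul, norm_smul, hy, ← hM, Real.norm_of_nonneg hp.le, norm_mul,
    Real.norm_of_nonneg hτ.le, Real.norm_of_nonneg (by positivity : 0 ≤ κ * b),
    Real.norm_eq_abs, mul_one] at h
  have h2 : τ * |κ * (1 - b) - a * τ| ≤ τ * (a * M) := by gcongr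
  have : (a * τ + κ * b) * ‖κ • x - τ • y‖ ≤ (a * τ + κ * b) * M := by linarith
  exact le_of_mul_le_mul_left this hp

/-! ### The area function and its lifts -/

theorem continuous_density {Y : Type*} [NormedAddCommGroup Y] [NormedSpace ℝ Y]
    (e : ℂ ≃L[ℝ] Y) : Continuous fun t : ℝ => (‖e (Complex.exp (t * Complex.I))‖ ^ 2)⁻¹ := by
  have h : Continuous fun t : ℝ => e (Complex.exp (t * Complex.I)) := e.continuous.comp (by fun_prop)
  refine (h.norm.pow 2).inv₀ fun t => ?_
  simp [Complex.exp_ne_zero]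

/-- The standard determinant form on `ℂ = ℝ²`. -/
noncomputable def wedge (u v : ℂ) : ℝ := u.re * v.im - u.im * v.re

/-- Twice the area of the sector of angles `[0, s]` of the unit ball of the norm `‖e ·‖`, measured
in polar coordinates; signed for `s < 0`. -/
noncomputable def sectorArea {Y : Type*} [NormedAddCommGroup Y] [NormedSpace ℝ Y]
    (e : ℂ ≃L[ℝ] Y) (s : ℝ) : ℝ :=
  ∫ t in (0 : ℝ)..s, (‖e (Complex.exp (t * Complex.I))‖ ^ 2)⁻¹

theorem hasDerivAt_sectorArea {Y : Type*} [NormedAddCommGroup Y] [NormedSpace ℝ Y]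
    (e : ℂ ≃L[ℝ] Y) (s : ℝ) :
    HasDerivAt (sectorArea e) ((‖e (Complex.exp (s * Complex.I))‖ ^ 2)⁻¹) s :=
  ((continuous_density e).integral_hasStrictDerivAt 0 s).hasDerivAt

/-- The unit ball is symmetric about the origin. -/
theorem sectorArea_add_pi {Y : Type*} [NormedAddCommGroup Y] [NormedSpace ℝ Y]
    (e : ℂ ≃L[ℝ] Y) (s : ℝ) :
    sectorArea e (s + Real.pi) = sectorArea e s + sectorArea e Real.pi := by
  have hper : Function.Periodic
      (fun t : ℝ => (‖e (Complex.exp (t * Complex.I))‖ ^ 2)⁻¹) Real.pi := by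
    intro t
    simp [add_mul, Complex.exp_add, Complex.exp_pi_mul_I]
  have hint := fun a b : ℝ => (continuous_density e).intervalIntegrable a b (μ := MeasureTheory.volume)
  have h := hper.intervalIntegral_add_eq s 0
  rw [zero_add] at h
  unfold sectorArea
  rw [← h, intervalIntegral.integral_add_adjacent_intervals (hint _ _) (hint _ _)]

/-- The sector area up to the direction of `v`, where the angle of `v` is lifted to the reals by
adding the angle from `z` to `v`, in `(-π, π]`, to the argument of `z`. -/
noncomputable def liftedArea {Y : Type*} [NormedAddCommGroup Y] [NormedSpace ℝ Y]
    (e : ℂ ≃L[ℝ] Y) (z v : ℂ) : ℝ :=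
  sectorArea e (z.arg + (v / z).arg)

/-- The shift `A` does not depend on `v`, so it cancels in combinations with total weight zero. -/
theorem exists_liftedArea_neg {Y : Type*} [NormedAddCommGroup Y] [NormedSpace ℝ Y]
    (e : ℂ ≃L[ℝ] Y) {z : ℂ} (hz : z ≠ 0) :
    ∃ A : ℝ, ∀ v, liftedArea e (-z) (-v) = liftedArea e z v + A := by
  have key : (-z).arg = z.arg + Real.pi ∨ (-z).arg + Real.pi = z.arg := by
    rcases lt_trichotomy z.im 0 with h | h | h
    · exact .inl (Complex.arg_neg_eq_arg_add_pi_of_im_neg h)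
    · rcases lt_trichotomy z.re 0 with h' | h' | h'
      · right
        rw [Complex.arg_neg_eq_arg_sub_pi_iff.2 (.inr ⟨h, h'⟩)]; ring
      · exact absurd (Complex.ext h' h) hz
      · exact .inl (Complex.arg_neg_eq_arg_add_pi_iff.2 (.inr ⟨h, h'⟩))
    · right; rw [Complex.arg_neg_eq_arg_sub_pi_of_im_pos h]; ring
  rcases key with h | h
  · refine ⟨sectorArea e Real.pi, fun v => ?_⟩
    rw [liftedArea, liftedArea, h, neg_div_neg_eq, add_right_comm, sectorArea_add_pi]
  · refine ⟨-sectorArea e Real.pi, fun v => ?_⟩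
    rw [liftedArea, liftedArea, ← h, neg_div_neg_eq, add_right_comm, sectorArea_add_pi]
    ring

/-- The identity `dα = (v ∧ dv) / ‖v‖²`, along a linear family `v = l q`. The lifted angle is the
imaginary part of `log z + log (v / z)`, which is holomorphic where both arguments avoid the
cut. -/
theorem hasFDerivAt_liftedArea {Y : Type*} [NormedAddCommGroup Y] [NormedSpace ℝ Y]
    (e : ℂ ≃L[ℝ] Y) (l : ℂ × ℂ →L[ℂ] ℂ) (p : ℂ × ℂ) (h1 : p.1 ∈ Complex.slitPlane)
    (h2 : l p / p.1 ∈ Complex.slitPlane) :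
    ∃ D : ℂ × ℂ →L[ℝ] ℝ, HasFDerivAt (fun q => liftedArea e q.1 (l q)) D p ∧
      ∀ q, D q = wedge (l p) (l q) / ‖e (l p)‖ ^ 2 := by
  have hp : p.1 ≠ 0 := Complex.slitPlane_ne_zero h1
  have hl : l p ≠ 0 := by
    intro h; rw [h, zero_div] at h2; exact Complex.slitPlane_ne_zero h2 rfl
  have hfst : HasFDerivAt (fun q : ℂ × ℂ => q.1) (ContinuousLinearMap.fst ℂ ℂ ℂ) p := hasFDerivAt_fst
  have hinv := (hasDerivAt_inv hp).comp_hasFDerivAt p hfst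
  have hdiv := (l.hasFDerivAt (x := p)).mul hinv
  have hlog := (hfst.clog h1).add (hdiv.clog (by simpa [div_eq_mul_inv] using h2))
  have him := Complex.imCLM.hasFDerivAt.comp p (hlog.restrictScalars ℝ)
  have hα := (hasDerivAt_sectorArea e (p.1.arg + (l p / p.1).arg)).comp_hasFDerivAt_of_eq p him
    (by simp [div_eq_mul_inv, Complex.log_im])
  refine ⟨_, hα.congr_of_eventuallyEq (.of_forall fun q => ?_), fun q => ?_⟩
  · simp [liftedArea, div_eq_mul_inv, Complex.log_im]
  · have hexp : Complex.exp ((p.1.arg + (l p / p.1).arg : ℝ) * Complex.I) =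
        ((‖l p‖⁻¹ : ℝ) : ℂ) * l p := by
      have e1 := Complex.norm_mul_exp_arg_mul_I p.1
      have e2 := Complex.norm_mul_exp_arg_mul_I (l p / p.1)
      have n1 : ((‖p.1‖ : ℝ) : ℂ) ≠ 0 := by simpa using hp
      have n2 : ((‖l p‖ : ℝ) : ℂ) ≠ 0 := by simpa using hl
      rw [Complex.ofReal_add, add_mul, Complex.exp_add]
      rw [eq_comm, Complex.ofReal_inv, inv_mul_eq_iff_eq_mul₀ n2]
      calc l p = p.1 * (l p / p.1) := by field_simp
        _ = ‖p.1‖ * Complex.exp (p.1.arg * Complex.I) * (‖l p / p.1‖ *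
            Complex.exp ((l p / p.1).arg * Complex.I)) := by rw [e1, e2]
        _ = _ := by
          rw [norm_div, Complex.ofReal_div]
          generalize Complex.exp (p.1.arg * Complex.I) = E
          generalize Complex.exp ((l p / p.1).arg * Complex.I) = F
          field_simp
    have hw : (l q / l p).im = wedge (l p) (l q) / ‖l p‖ ^ 2 := by
      rw [Complex.div_im, ← Complex.normSq_eq_norm_sq, wedge]; ring
    have hd : p.1⁻¹ * q.1 + (l p * p.1⁻¹)⁻¹ * (l p * (-(p.1 ^ 2)⁻¹ * q.1) + p.1⁻¹ * l q) =
        l q / l p := by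
      field_simp; ring
    have n2 : ‖l p‖ ≠ 0 := by simpa using hl
    have n3 : ‖e (l p)‖ ≠ 0 := by simpa using hl
    rw [hexp, ← Complex.real_smul, map_smul, norm_smul, norm_inv, norm_norm]
    have : ∀ x : ℝ, ∀ w : ℂ, w = l q / l p → x * w.im = x * (wedge (l p) (l q) / ‖l p‖ ^ 2) := by
      rintro x w rfl; rw [hw]
    simp only [smul_apply, smul_eq_mul, ContinuousLinearMap.comp_apply,
      ContinuousLinearMap.coe_restrictScalars', Complex.imCLM_apply]
    rw [this _ _ (by rw [← hd]; simp; ring)]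
    field_simp

/-! ### The energy of a pair of vectors -/

/-- The combination of the areas at `κ z₁ ± τ z₂`, `z₁` and `z₂` whose critical points are the
sought pairs. All angles are lifted relative to `z₁`, and the weights add up to zero. -/
noncomputable def energy {Y : Type*} [NormedAddCommGroup Y] [NormedSpace ℝ Y]
    (e : ℂ ≃L[ℝ] Y) (κ τ : ℝ) (p : ℂ × ℂ) : ℝ :=
  (κ ^ 2 + τ ^ 2) * (liftedArea e p.1 (κ * p.1 + τ * p.2) + liftedArea e p.1 (κ * p.1 - τ * p.2))
    - 2 * κ ^ 2 * liftedArea e p.1 p.1 - 2 * τ ^ 2 * liftedArea e p.1 p.2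

theorem energy_neg {Y : Type*} [NormedAddCommGroup Y] [NormedSpace ℝ Y]
    (e : ℂ ≃L[ℝ] Y) (κ τ : ℝ) {p : ℂ × ℂ} (hp : p.1 ≠ 0) :
    energy e κ τ (-p) = energy e κ τ p := by
  obtain ⟨A, hA⟩ := exists_liftedArea_neg e hp
  have h1 : (κ : ℂ) * -p.1 + τ * -p.2 = -(κ * p.1 + τ * p.2) := by ring
  have h2 : (κ : ℂ) * -p.1 - τ * -p.2 = -(κ * p.1 - τ * p.2) := by ring
  simp only [energy, Prod.fst_neg, Prod.snd_neg, h1, h2, hA]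
  ring

/-- The energy is differentiable at every positively oriented pair; where `p.1` lies on the cut of
the argument, its invariance under `p ↦ -p` is used. -/
theorem hasFDerivAt_energy {Y : Type*} [NormedAddCommGroup Y] [NormedSpace ℝ Y]
    (e : ℂ ≃L[ℝ] Y) {κ τ : ℝ} (hτ : 0 < τ) {p : ℂ × ℂ} (hw : 0 < wedge p.1 p.2) :
    ∃ D : ℂ × ℂ →L[ℝ] ℝ, HasFDerivAt (energy e κ τ) D p ∧ ∀ q, D q =
      (κ ^ 2 + τ ^ 2) *
        (wedge (κ * p.1 + τ * p.2) (κ * q.1 + τ * q.2) / ‖e (κ * p.1 + τ * p.2)‖ ^ 2 +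
          wedge (κ * p.1 - τ * p.2) (κ * q.1 - τ * q.2) / ‖e (κ * p.1 - τ * p.2)‖ ^ 2)
        - 2 * κ ^ 2 * (wedge p.1 q.1 / ‖e p.1‖ ^ 2)
        - 2 * τ ^ 2 * (wedge p.2 q.2 / ‖e p.2‖ ^ 2) := by
  wlog h1 : p.1 ∈ Complex.slitPlane generalizing p
  · have hp : p.1 ≠ 0 := by rintro h; simp [h, wedge] at hw
    obtain ⟨D, hD, hDq⟩ := this (p := -p) (by simpa [wedge] using hw)
      ((Complex.mem_slitPlane_or_neg_mem_slitPlane hp).resolve_left h1)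
    have hc := hD.comp p (hasFDerivAt_id (𝕜 := ℝ) p).neg
    refine ⟨_, hc.congr_of_eventuallyEq ?_, fun q => ?_⟩
    · filter_upwards [continuous_fst.continuousAt.eventually_ne hp] with q hq
      exact (energy_neg e κ τ hq).symm
    · have n1 : (κ : ℂ) * -p.1 + τ * -p.2 = -(κ * p.1 + τ * p.2) := by ring
      have n2 : (κ : ℂ) * -p.1 - τ * -p.2 = -(κ * p.1 - τ * p.2) := by ring
      have n3 : (κ : ℂ) * -q.1 + τ * -q.2 = -(κ * q.1 + τ * q.2) := by ring
      have n4 : (κ : ℂ) * -q.1 - τ * -q.2 = -(κ * q.1 - τ * q.2) := by ring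
      have hww : ∀ u v, wedge (-u) (-v) = wedge u v := fun u v => by simp [wedge]
      simp only [ContinuousLinearMap.comp_apply, neg_apply,
        ContinuousLinearMap.coe_id', id_eq, hDq, Prod.fst_neg, Prod.snd_neg, n1, n2, n3, n4, hww,
        map_neg, norm_neg]
  have hp : p.1 ≠ 0 := Complex.slitPlane_ne_zero h1
  have hN : 0 < Complex.normSq p.1 := Complex.normSq_pos.2 hp
  have him : ∀ v : ℂ, (v / p.1).im = wedge p.1 v / Complex.normSq p.1 := fun v => by
    rw [Complex.div_im, wedge]; ring
  have hslit : ∀ v : ℂ, wedge p.1 v ≠ 0 → v / p.1 ∈ Complex.slitPlane := fun v hv =>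
    .inr (by rw [him]; positivity)
  let L1 := ContinuousLinearMap.fst ℂ ℂ ℂ
  let L2 := ContinuousLinearMap.snd ℂ ℂ ℂ
  have w1 : wedge p.1 (κ * p.1 + τ * p.2) = τ * wedge p.1 p.2 := by simp [wedge]; ring
  have w2 : wedge p.1 (κ * p.1 - τ * p.2) = -(τ * wedge p.1 p.2) := by simp [wedge]; ring
  obtain ⟨D1, h1D, e1⟩ := hasFDerivAt_liftedArea e ((κ : ℂ) • L1 + (τ : ℂ) • L2) p h1
    (hslit _ (by
      change wedge p.1 (κ * p.1 + τ * p.2) ≠ 0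
      rw [w1]; positivity))
  obtain ⟨D2, h2D, e2⟩ := hasFDerivAt_liftedArea e ((κ : ℂ) • L1 - (τ : ℂ) • L2) p h1
    (hslit _ (by
      change wedge p.1 (κ * p.1 - τ * p.2) ≠ 0
      rw [w2, neg_ne_zero]; positivity))
  obtain ⟨D3, h3D, e3⟩ := hasFDerivAt_liftedArea e L1 p h1 (by simp [L1, hp])
  obtain ⟨D4, h4D, e4⟩ := hasFDerivAt_liftedArea e L2 p h1 (hslit _ hw.ne')
  refine ⟨_, (((h1D.add h2D).const_mul (κ ^ 2 + τ ^ 2)).sub (h3D.const_mul (2 * κ ^ 2))).sub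
    (h4D.const_mul (2 * τ ^ 2)), fun q => ?_⟩
  simp [e1, e2, e3, e4, L1, L2]
  ring

/-! ### The unit circle of the norm -/

/-- The vector of norm `‖e ·‖` equal to one with argument `φ`. -/
noncomputable def unitVec {Y : Type*} [NormedAddCommGroup Y] [NormedSpace ℝ Y]
    (e : ℂ ≃L[ℝ] Y) (φ : ℝ) : ℂ :=
  ‖e (Complex.exp (φ * Complex.I))‖⁻¹ • Complex.exp (φ * Complex.I)

theorem norm_map_exp_pos {Y : Type*} [NormedAddCommGroup Y] [NormedSpace ℝ Y]
    (e : ℂ ≃L[ℝ] Y) (φ : ℝ) : 0 < ‖e (Complex.exp (φ * Complex.I))‖ := by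
  simp [Complex.exp_ne_zero]

theorem norm_unitVec {Y : Type*} [NormedAddCommGroup Y] [NormedSpace ℝ Y]
    (e : ℂ ≃L[ℝ] Y) (φ : ℝ) : ‖e (unitVec e φ)‖ = 1 := by
  rw [unitVec, map_smul, norm_smul, norm_inv, norm_norm,
    inv_mul_cancel₀ (norm_map_exp_pos e φ).ne']

theorem unitVec_arg {Y : Type*} [NormedAddCommGroup Y] [NormedSpace ℝ Y]
    (e : ℂ ≃L[ℝ] Y) {u : ℂ} (hu : ‖e u‖ = 1) : unitVec e u.arg = u := by
  have h := Complex.norm_mul_exp_arg_mul_I u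
  rw [← Complex.real_smul] at h
  have hn : ‖u‖ * ‖e (Complex.exp (u.arg * Complex.I))‖ = 1 := by
    rw [← hu]
    conv_rhs => rw [← h]
    rw [map_smul, norm_smul, norm_norm]
  rw [unitVec, ← eq_inv_of_mul_eq_one_left hn, h]

theorem wedge_unitVec {Y : Type*} [NormedAddCommGroup Y] [NormedSpace ℝ Y]
    (e : ℂ ≃L[ℝ] Y) (φ ψ : ℝ) : wedge (unitVec e φ) (unitVec e ψ) =
      ‖e (Complex.exp (φ * Complex.I))‖⁻¹ * ‖e (Complex.exp (ψ * Complex.I))‖⁻¹ *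
        Real.sin (ψ - φ) := by
  simp only [wedge, unitVec, Complex.smul_re, Complex.smul_im, Complex.exp_ofReal_mul_I_re,
    Complex.exp_ofReal_mul_I_im, Real.sin_sub, smul_eq_mul]
  ring

theorem continuous_unitVec {Y : Type*} [NormedAddCommGroup Y] [NormedSpace ℝ Y]
    (e : ℂ ≃L[ℝ] Y) : Continuous (unitVec e) := by
  have h : Continuous fun t : ℝ => e (Complex.exp (t * Complex.I)) :=
    e.continuous.comp (by fun_prop)
  exact (h.norm.inv₀ fun t => (norm_map_exp_pos e t).ne').smul (by fun_prop)

theorem exists_unitVec_lipschitz {Y : Type*} [NormedAddCommGroup Y] [NormedSpace ℝ Y]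
    (e : ℂ ≃L[ℝ] Y) : ∃ C, 0 < C ∧ ∀ φ η, ‖unitVec e (φ + η) - unitVec e φ‖ ≤ C * |η| := by
  set B := ‖(e : ℂ →L[ℝ] Y)‖
  set B' := ‖(e.symm : Y →L[ℝ] ℂ)‖
  have hB : ∀ u, ‖e u‖ ≤ B * ‖u‖ := (e : ℂ →L[ℝ] Y).le_opNorm
  have hB' : ∀ u, ‖u‖ ≤ B' * ‖e u‖ := fun u => by
    simpa using (e.symm : Y →L[ℝ] ℂ).le_opNorm (e u)
  refine ⟨B' * (1 + B' * B) + 1, by positivity, fun φ η => ?_⟩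
  have hn := norm_map_exp_pos e φ
  have hn' := norm_map_exp_pos e (φ + η)
  set u := Complex.exp (φ * Complex.I) with hu
  set u' := Complex.exp ((φ + η : ℝ) * Complex.I) with hu'
  have hu1 : ‖u‖ = 1 := Complex.norm_exp_ofReal_mul_I _
  have hu1' : ‖u'‖ = 1 := Complex.norm_exp_ofReal_mul_I _
  have hd : ‖u' - u‖ ≤ |η| := by
    have : u' - u = u * (Complex.exp (Complex.I * η) - 1) := by
      rw [hu, hu', mul_sub, ← Complex.exp_add]; push_cast; ring_nf
    rw [this, norm_mul, hu1, one_mul]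
    exact Real.norm_exp_I_mul_ofReal_sub_one_le
  have hinv : ‖e u'‖⁻¹ ≤ B' := by
    rw [inv_le_iff_one_le_mul₀ hn', ← hu1']; exact hB' u'
  have hσ : ‖unitVec e φ‖ ≤ B' := by
    have := hB' (unitVec e φ)
    rwa [norm_unitVec, mul_one] at this
  have hN : |‖e u‖ - ‖e u'‖| ≤ B * |η| := by
    rw [abs_sub_comm]
    refine (abs_norm_sub_norm_le _ _).trans ?_
    rw [← map_sub]
    exact (hB _).trans (by gcongr)
  have key : unitVec e (φ + η) - unitVec e φ =
      ‖e u'‖⁻¹ • ((u' - u) + (‖e u‖ - ‖e u'‖) • unitVec e φ) := by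
    have h1 : ‖e u‖ • unitVec e φ = u := by
      rw [unitVec, smul_inv_smul₀ hn.ne']
    have h2 : unitVec e φ = ‖e u'‖⁻¹ • ‖e u'‖ • unitVec e φ := by
      rw [inv_smul_smul₀ hn'.ne']
    rw [sub_smul, h1, sub_add_sub_cancel, smul_sub, ← h2]; rfl
  rw [key, norm_smul, norm_inv, norm_norm]
  calc _ ≤ B' * (|η| + (B * |η|) * B') := by
        gcongr
        refine (norm_add_le _ _).trans ?_
        rw [norm_smul, Real.norm_eq_abs]
        gcongr
    _ ≤ _ := by nlinarith [abs_nonneg η]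

/-- Rotating a unit vector by a small angle `η` sweeps an area of first order in `η`. -/
theorem exists_wedge_lower {Y : Type*} [NormedAddCommGroup Y] [NormedSpace ℝ Y]
    (e : ℂ ≃L[ℝ] Y) : ∃ c, 0 < c ∧ ∀ φ η, 0 ≤ η → η ≤ 1 →
      c * η ≤ wedge (unitVec e φ) (unitVec e (φ + η)) ∧
      c * η ≤ - wedge (unitVec e φ) (unitVec e (φ - η)) := by
  set B := ‖(e : ℂ →L[ℝ] Y)‖
  have hB : ∀ φ : ℝ, ‖e (Complex.exp (φ * Complex.I))‖ ≤ B := fun φ => by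
    simpa [Complex.norm_exp_ofReal_mul_I] using
      (e : ℂ →L[ℝ] Y).le_opNorm (Complex.exp (φ * Complex.I))
  have hB0 : 0 < B := (norm_map_exp_pos e 0).trans_le (hB 0)
  refine ⟨B⁻¹ * B⁻¹ * (2 / Real.pi), by positivity, fun φ η h0 h1 => ?_⟩
  have hs : 2 / Real.pi * η ≤ Real.sin η :=
    Real.mul_le_sin h0 (h1.trans (by linarith [Real.pi_gt_three]))
  have hs0 : 0 ≤ 2 / Real.pi * η := by positivity
  have hinv : ∀ φ : ℝ, B⁻¹ ≤ ‖e (Complex.exp (φ * Complex.I))‖⁻¹ := fun φ => by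
    have := norm_map_exp_pos e φ
    gcongr
    exact hB φ
  have key : ∀ ψ : ℝ, B⁻¹ * B⁻¹ * (2 / Real.pi) * η ≤ ‖e (Complex.exp (φ * Complex.I))‖⁻¹ *
      ‖e (Complex.exp (ψ * Complex.I))‖⁻¹ * Real.sin η := fun ψ => by
    rw [mul_assoc _ _ η]
    have := norm_map_exp_pos e φ
    have := norm_map_exp_pos e ψ
    gcongr
    · exact hB φ
    · exact hB ψ
  rw [wedge_unitVec, wedge_unitVec, add_sub_cancel_left, sub_sub_cancel_left, Real.sin_neg,
    mul_neg, neg_neg]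
  exact ⟨key _, key _⟩

/-! ### Moving along the pairs with equal diagonals -/

/-- The condition that `y` lies between `x` and `z` is expressed by signs of `wedge`; `s = 1` and
`s = -1` correspond to the two orientations. -/
theorem norm_sub_mono_wedge {Y : Type*} [NormedAddCommGroup Y] [NormedSpace ℝ Y]
    (e : ℂ ≃L[ℝ] Y) {κ τ : ℝ} (hκ : 0 < κ) (hτ : 0 < τ) {x y z : ℂ}
    (hx : ‖e x‖ = 1) (hy : ‖e y‖ = 1) (hz : ‖e z‖ = 1) {s : ℝ}
    (hxz : 0 < s * wedge x z) (hxy : 0 ≤ s * wedge x y) (hyz : 0 ≤ s * wedge y z) :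
    ‖e (κ * x - τ * y)‖ ≤ ‖e (κ * x - τ * z)‖ := by
  have hw : wedge x z ≠ 0 := right_ne_zero_of_mul hxz.ne'
  have hs : s ≠ 0 := left_ne_zero_of_mul hxz.ne'
  have key : y = (s * wedge y z / (s * wedge x z)) • x + (s * wedge x y / (s * wedge x z)) • z := by
    rw [mul_div_mul_left _ _ hs, mul_div_mul_left _ _ hs]
    apply Complex.ext <;> simp only [Complex.add_re, Complex.add_im, Complex.smul_re,
      Complex.smul_im, smul_eq_mul] <;> field_simp <;> simp only [wedge] <;> ring
  have h := norm_sub_mono hx hy hz (div_nonneg hyz hxz.le) (div_nonneg hxy hxz.le)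
    (by conv_lhs => rw [key]
        simp only [map_add, map_smul]) hκ hτ
  simpa only [← map_smul, ← map_sub, Complex.real_smul] using h

/-- The difference of the lengths of the two diagonals of the parallelogram on `κ x` and `τ y`. -/
noncomputable def diagGap {Y : Type*} [NormedAddCommGroup Y] [NormedSpace ℝ Y]
    (e : ℂ ≃L[ℝ] Y) (κ τ : ℝ) (x y : ℂ) : ℝ :=
  ‖e (κ * x + τ * y)‖ - ‖e (κ * x - τ * y)‖

theorem diagGap_anti_right {Y : Type*} [NormedAddCommGroup Y] [NormedSpace ℝ Y]
    (e : ℂ ≃L[ℝ] Y) {κ τ : ℝ} (hκ : 0 < κ) (hτ : 0 < τ) {x u v : ℂ}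
    (hx : ‖e x‖ = 1) (hu : ‖e u‖ = 1) (hv : ‖e v‖ = 1)
    (hxu : 0 < wedge x u) (hxv : 0 < wedge x v) (huv : 0 ≤ wedge u v) :
    diagGap e κ τ x v ≤ diagGap e κ τ x u := by
  have h1 := norm_sub_mono_wedge e hκ hτ hx hu hv (s := 1) (by simpa) (by simpa using hxu.le)
    (by simpa)
  have h2 := norm_sub_mono_wedge e hκ hτ (x := -x) (by simpa) hv hu (s := -1)
    (by simp only [wedge, Complex.neg_re, Complex.neg_im] at *; linarith)
    (by simp only [wedge, Complex.neg_re, Complex.neg_im] at *; linarith)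
    (by simp only [wedge] at *; linarith)
  rw [show (κ : ℂ) * -x - τ * v = -(κ * x + τ * v) by ring,
    show (κ : ℂ) * -x - τ * u = -(κ * x + τ * u) by ring, map_neg, map_neg, norm_neg, norm_neg] at h2
  unfold diagGap
  linarith

theorem diagGap_mono_left {Y : Type*} [NormedAddCommGroup Y] [NormedSpace ℝ Y]
    (e : ℂ ≃L[ℝ] Y) {κ τ : ℝ} (hκ : 0 < κ) (hτ : 0 < τ) {y u v : ℂ}
    (hy : ‖e y‖ = 1) (hu : ‖e u‖ = 1) (hv : ‖e v‖ = 1)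
    (huy : 0 < wedge u y) (hvy : 0 < wedge v y) (huv : 0 ≤ wedge u v) :
    diagGap e κ τ u y ≤ diagGap e κ τ v y := by
  have hw : ∀ u, wedge (-y) u = wedge u y := fun u => by simp [wedge]; ring
  have h := diagGap_anti_right e hτ hκ (x := -y) (by simpa) hu hv (by rwa [hw]) (by rwa [hw]) huv
  have hg : ∀ u, diagGap e τ κ (-y) u = - diagGap e κ τ u y := fun u => by
    unfold diagGap
    rw [show (τ : ℂ) * -y - κ * u = -(κ * u + τ * y) by ring,
      show (τ : ℂ) * -y + κ * u = κ * u - τ * y by ring, map_neg, norm_neg]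
    ring
  rw [hg, hg] at h
  linarith

theorem continuous_diagGap {Y : Type*} [NormedAddCommGroup Y] [NormedSpace ℝ Y]
    (e : ℂ ≃L[ℝ] Y) (κ τ : ℝ) : Continuous fun p : ℂ × ℂ => diagGap e κ τ p.1 p.2 := by
  have h1 : Continuous fun p : ℂ × ℂ => e (κ * p.1 + τ * p.2) := e.continuous.comp (by fun_prop)
  have h2 : Continuous fun p : ℂ × ℂ => e (κ * p.1 - τ * p.2) := e.continuous.comp (by fun_prop)
  exact h1.norm.sub h2.norm

theorem continuous_wedge : Continuous fun p : ℂ × ℂ => wedge p.1 p.2 := by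
  unfold wedge; fun_prop

/-- Near a positively oriented pair with equal diagonals there are further ones, obtained by
rotating both vectors forward (`s = 1`) or both backward (`s = -1`) by angles of total size `δ`. -/
theorem exists_move {Y : Type*} [NormedAddCommGroup Y] [NormedSpace ℝ Y]
    (e : ℂ ≃L[ℝ] Y) {κ τ : ℝ} (hκ : 0 < κ) (hτ : 0 < τ) {φ₁ φ₂ : ℝ}
    (hw : 0 < wedge (unitVec e φ₁) (unitVec e φ₂))
    (hG : diagGap e κ τ (unitVec e φ₁) (unitVec e φ₂) = 0) {s : ℝ} (hs : s = 1 ∨ s = -1) :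
    ∃ δ₀ > 0, ∀ δ, 0 < δ → δ < δ₀ → ∃ t ∈ Set.Icc (0 : ℝ) 1,
      diagGap e κ τ (unitVec e (φ₁ + s * (δ * t))) (unitVec e (φ₂ + s * (δ * (1 - t)))) = 0 ∧
      0 < wedge (unitVec e (φ₁ + s * (δ * t))) (unitVec e (φ₂ + s * (δ * (1 - t)))) := by
  have hσ := continuous_unitVec e
  obtain ⟨c, hc, hcw⟩ := exists_wedge_lower e
  have hcont : Continuous fun q : ℝ × ℝ => wedge (unitVec e (φ₁ + q.1)) (unitVec e (φ₂ + q.2)) :=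
    continuous_wedge.comp (f := fun q : ℝ × ℝ => (unitVec e (φ₁ + q.1), unitVec e (φ₂ + q.2)))
      (by fun_prop)
  have hnear : ∀ᶠ q in nhds (0 : ℝ × ℝ),
      0 < wedge (unitVec e (φ₁ + q.1)) (unitVec e (φ₂ + q.2)) :=
    hcont.continuousAt.eventually (lt_mem_nhds (by simpa using hw))
  obtain ⟨ε, hε, hball⟩ := Metric.eventually_nhds_iff.1 hnear
  have hsabs : |s| = 1 := by rcases hs with rfl | rfl <;> simp
  refine ⟨min ε 1, by positivity, fun δ hδ hδε => ?_⟩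
  have hδ1 : δ ≤ 1 := (hδε.trans_le (min_le_right _ _)).le
  have hδε := hδε.trans_le (min_le_left _ _)
  have hpos : ∀ t ∈ Set.Icc (0 : ℝ) 1,
      0 < wedge (unitVec e (φ₁ + s * (δ * t))) (unitVec e (φ₂ + s * (δ * (1 - t)))) := by
    rintro t ⟨h0, h1⟩
    refine hball (y := (s * (δ * t), s * (δ * (1 - t)))) ?_
    have h1' : 0 ≤ 1 - t := by linarith
    simp only [dist_zero_right, Prod.norm_mk, Real.norm_eq_abs, abs_mul, hsabs, one_mul,
      abs_of_pos hδ, abs_of_nonneg h0, abs_of_nonneg h1']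
    refine max_lt ?_ ?_ <;> nlinarith
  -- At `t = 0` only the second vector is moved and at `t = 1` only the first one, so the gap has
  -- opposite signs at the two ends.
  set g : ℝ → ℝ := fun t => s *
    diagGap e κ τ (unitVec e (φ₁ + s * (δ * t))) (unitVec e (φ₂ + s * (δ * (1 - t))))
  have hg : Continuous g := continuous_const.mul ((continuous_diagGap e κ τ).comp
    (f := fun t : ℝ => (unitVec e (φ₁ + s * (δ * t)), unitVec e (φ₂ + s * (δ * (1 - t)))))
    (by fun_prop))
  have hn := norm_unitVec e
  have hp0 := hpos 0 (by simp)
  have hp1 := hpos 1 (by simp)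
  simp only [mul_zero, add_zero, sub_zero, sub_self, mul_one] at hp0 hp1
  have hsw : ∀ u v, wedge u v = - wedge v u := fun u v => by unfold wedge; ring
  have hcδ : 0 < c * δ := by positivity
  have hg01 : g 0 ≤ 0 ∧ 0 ≤ g 1 := by
    simp only [g, mul_zero, add_zero, sub_zero, sub_self, mul_one]
    rcases hs with rfl | rfl
    · have h2 := (hcw φ₂ δ hδ.le hδ1).1
      have h1 := (hcw φ₁ δ hδ.le hδ1).1
      simp only [one_mul] at *
      have a2 := diagGap_anti_right e hκ hτ (hn φ₁) (hn φ₂) (hn (φ₂ + δ)) hw hp0 (by linarith)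
      have a1 := diagGap_mono_left e hκ hτ (hn φ₂) (hn φ₁) (hn (φ₁ + δ)) hw hp1 (by linarith)
      constructor <;> linarith
    · have h2 := (hcw φ₂ δ hδ.le hδ1).2
      have h1 := (hcw φ₁ δ hδ.le hδ1).2
      simp only [neg_mul, one_mul, ← sub_eq_add_neg] at *
      rw [← hsw] at h1 h2
      have a2 := diagGap_anti_right e hκ hτ (hn φ₁) (hn (φ₂ - δ)) (hn φ₂) hp0 hw (by linarith)
      have a1 := diagGap_mono_left e hκ hτ (hn φ₂) (hn (φ₁ - δ)) (hn φ₁) hp1 hw (by linarith)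
      constructor <;> linarith
  obtain ⟨t, ht, hgt⟩ := intermediate_value_Icc zero_le_one hg.continuousOn hg01
  refine ⟨t, ht, ?_, hpos t ht⟩
  have hs0 : s ≠ 0 := by rintro rfl; simp at hsabs
  exact (mul_eq_zero.1 hgt).resolve_left hs0

/-! ### The maximum of the energy -/

/-- Pairs of unit vectors with equal diagonals. The orientation condition is not strict, so that the
set is closed; linearly dependent pairs are excluded by the equality of the diagonals. -/
def configs {Y : Type*} [NormedAddCommGroup Y] [NormedSpace ℝ Y]
    (e : ℂ ≃L[ℝ] Y) (κ τ : ℝ) : Set (ℂ × ℂ) :=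
  {p | ‖e p.1‖ = 1 ∧ ‖e p.2‖ = 1 ∧ diagGap e κ τ p.1 p.2 = 0 ∧ 0 ≤ wedge p.1 p.2}

theorem diagGap_smul_self {Y : Type*} [NormedAddCommGroup Y] [NormedSpace ℝ Y]
    (e : ℂ ≃L[ℝ] Y) (κ τ r : ℝ) {y : ℂ} (hy : ‖e y‖ = 1) :
    diagGap e κ τ (r • y) y = |κ * r + τ| - |κ * r - τ| := by
  have h1 : (κ : ℂ) * (r • y) + τ * y = (κ * r + τ) • y := by
    simp only [Complex.real_smul]; push_cast; ring
  have h2 : (κ : ℂ) * (r • y) - τ * y = (κ * r - τ) • y := by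
    simp only [Complex.real_smul]; push_cast; ring
  rw [diagGap, h1, h2, map_smul, map_smul, norm_smul, norm_smul, hy, mul_one, mul_one,
    Real.norm_eq_abs, Real.norm_eq_abs]

theorem wedge_pos_of_mem_configs {Y : Type*} [NormedAddCommGroup Y] [NormedSpace ℝ Y]
    {e : ℂ ≃L[ℝ] Y} {κ τ : ℝ} (hκ : 0 < κ) (hτ : 0 < τ) {p : ℂ × ℂ} (hp : p ∈ configs e κ τ) :
    0 < wedge p.1 p.2 := by
  obtain ⟨h1, h2, hG, hw⟩ := hp
  refine hw.lt_of_ne fun h0 => ?_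
  have hp2 : p.2 ≠ 0 := by rintro h; simp [h] at h2
  have hN : 0 < Complex.normSq p.2 := Complex.normSq_pos.2 hp2
  have key : p.1 = ((p.1.re * p.2.re + p.1.im * p.2.im) / Complex.normSq p.2) • p.2 := by
    simp only [wedge] at h0
    apply Complex.ext <;> simp only [Complex.smul_re, Complex.smul_im, smul_eq_mul] <;>
      field_simp <;> simp only [Complex.normSq_apply]
    · linear_combination -p.2.im * h0
    · linear_combination p.2.re * h0
  generalize (p.1.re * p.2.re + p.1.im * p.2.im) / Complex.normSq p.2 = r at key
  have hr : |r| = 1 := by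
    rw [key, map_smul, norm_smul, h2, mul_one, Real.norm_eq_abs] at h1
    exact h1
  rw [key, diagGap_smul_self e κ τ r h2, sub_eq_zero, ← sq_eq_sq_iff_abs_eq_abs] at hG
  have : κ * τ * r = 0 := by linear_combination hG / 4
  have hr0 : r ≠ 0 := by rintro rfl; simp at hr
  exact (mul_ne_zero (mul_pos hκ hτ).ne' hr0) this

theorem configs_nonempty {Y : Type*} [NormedAddCommGroup Y] [NormedSpace ℝ Y]
    (e : ℂ ≃L[ℝ] Y) {κ τ : ℝ} (hκ : 0 < κ) (hτ : 0 < τ) : (configs e κ τ).Nonempty := by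
  have hσ := continuous_unitVec e
  have hn := norm_unitVec e
  have hg : Continuous fun φ => diagGap e κ τ (unitVec e φ) (unitVec e 0) :=
    (continuous_diagGap e κ τ).comp (f := fun φ => (unitVec e φ, unitVec e 0)) (by fun_prop)
  have hπ : unitVec e (-Real.pi) = (-1 : ℝ) • unitVec e 0 := by
    simp [unitVec, Complex.exp_neg, Complex.exp_pi_mul_I]
  have hneg : diagGap e κ τ (unitVec e (-Real.pi)) (unitVec e 0) ≤ 0 := by
    rw [hπ, diagGap_smul_self e κ τ _ (hn 0), sub_nonpos]
    exact sq_le_sq.1 (by nlinarith [mul_pos hκ hτ])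
  have hpos : 0 ≤ diagGap e κ τ (unitVec e 0) (unitVec e 0) := by
    have := diagGap_smul_self e κ τ 1 (hn 0)
    rw [one_smul] at this
    rw [this, sub_nonneg]
    exact sq_le_sq.1 (by nlinarith [mul_pos hκ hτ])
  obtain ⟨φ, hφ, h0⟩ := intermediate_value_Icc (by linarith [Real.pi_pos] : -Real.pi ≤ 0)
    hg.continuousOn ⟨hneg, hpos⟩
  refine ⟨(unitVec e φ, unitVec e 0), hn _, hn _, h0, ?_⟩
  rw [wedge_unitVec]
  have := Real.sin_nonneg_of_nonneg_of_le_pi (x := 0 - φ) (by linarith [hφ.2]) (by linarith [hφ.1])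
  positivity

theorem isCompact_configs {Y : Type*} [NormedAddCommGroup Y] [NormedSpace ℝ Y]
    (e : ℂ ≃L[ℝ] Y) (κ τ : ℝ) : IsCompact (configs e κ τ) := by
  refine Metric.isCompact_of_isClosed_isBounded ?_ ?_
  · have he := e.continuous
    exact ((isClosed_eq (by fun_prop) continuous_const).inter
      ((isClosed_eq (by fun_prop) continuous_const).inter
      ((isClosed_eq (continuous_diagGap e κ τ) continuous_const).inter
      (isClosed_le continuous_const continuous_wedge))) :
      IsClosed ({p : ℂ × ℂ | ‖e p.1‖ = 1} ∩ ({p | ‖e p.2‖ = 1} ∩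
        ({p | diagGap e κ τ p.1 p.2 = 0} ∩ {p | 0 ≤ wedge p.1 p.2}))))
  · refine isBounded_iff_forall_norm_le.2 ⟨‖(e.symm : Y →L[ℝ] ℂ)‖, fun p hp => ?_⟩
    have hB' : ∀ u, ‖e u‖ = 1 → ‖u‖ ≤ ‖(e.symm : Y →L[ℝ] ℂ)‖ := fun u hu => by
      simpa [hu] using (e.symm : Y →L[ℝ] ℂ).le_opNorm (e u)
    exact max_le (hB' _ hp.1) (hB' _ hp.2.1)

/-- At a maximum of the energy the common length of the diagonals is `√(κ² + τ²)`. -/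
theorem norm_eq_of_isMaxOn {Y : Type*} [NormedAddCommGroup Y] [NormedSpace ℝ Y]
    {e : ℂ ≃L[ℝ] Y} {κ τ : ℝ} (hκ : 0 < κ) (hτ : 0 < τ) {p : ℂ × ℂ} (hp : p ∈ configs e κ τ)
    (hmax : IsMaxOn (energy e κ τ) (configs e κ τ) p) :
    ‖e (κ * p.1 + τ * p.2)‖ ^ 2 = κ ^ 2 + τ ^ 2 := by
  have hw := wedge_pos_of_mem_configs hκ hτ hp
  obtain ⟨D, hD, hDq⟩ := hasFDerivAt_energy e (κ := κ) hτ hw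
  obtain ⟨hp1, hp2, hG, -⟩ := hp
  have hminus : ‖e (κ * p.1 - τ * p.2)‖ = ‖e (κ * p.1 + τ * p.2)‖ := (sub_eq_zero.1 hG).symm
  have hT : 0 < ‖e (κ * p.1 + τ * p.2)‖ := by
    rw [norm_pos_iff, ne_eq, map_eq_zero_iff e e.injective]
    intro h
    have : τ * wedge p.1 p.2 = wedge p.1 (κ * p.1 + τ * p.2) := by simp [wedge]; ring
    have h' : 0 < τ * wedge p.1 p.2 := by positivity
    rw [this, h] at h'
    simp [wedge] at h'
  rw [hminus, hp1, hp2] at hDq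
  generalize ‖e (κ * p.1 + τ * p.2)‖ = T at hT hDq
  set m := 2 * ((κ ^ 2 + τ ^ 2) / T ^ 2 - 1) with hm
  have hDm : ∀ q, D q = m * (κ ^ 2 * wedge p.1 q.1 + τ ^ 2 * wedge p.2 q.2) := fun q => by
    rw [hDq, hm]
    have : wedge (κ * p.1 + τ * p.2) (κ * q.1 + τ * q.2) +
        wedge (κ * p.1 - τ * p.2) (κ * q.1 - τ * q.2) =
        2 * (κ ^ 2 * wedge p.1 q.1 + τ ^ 2 * wedge p.2 q.2) := by simp [wedge]; ring
    rw [← add_div, this]; ring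
  by_contra hne
  have hm0 : m ≠ 0 := by
    intro h
    have h1 : (κ ^ 2 + τ ^ 2) / T ^ 2 = 1 := by linarith
    exact hne ((div_eq_one_iff_eq (by positivity)).1 h1).symm
  -- The direction of rotation that increases the energy.
  obtain ⟨s, hs, hsm⟩ : ∃ s : ℝ, (s = 1 ∨ s = -1) ∧ m = |m| * s := by
    rcases hm0.lt_or_gt with h | h
    · exact ⟨-1, .inr rfl, by rw [abs_of_neg h]; ring⟩
    · exact ⟨1, .inl rfl, by rw [abs_of_pos h]; ring⟩
  have hsabs : |s| = 1 := by rcases hs with rfl | rfl <;> simp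
  have hma : 0 < |m| := abs_pos.2 hm0
  have he1 := unitVec_arg e hp1
  have he2 := unitVec_arg e hp2
  set φ₁ := p.1.arg
  set φ₂ := p.2.arg
  rw [← he1, ← he2] at hw hG
  obtain ⟨δ₀, hδ₀, hmove⟩ := exists_move e hκ hτ hw hG hs
  obtain ⟨C, hC, hLip⟩ := exists_unitVec_lipschitz e
  obtain ⟨c, hc, hlow⟩ := exists_wedge_lower e
  have hlow' : ∀ φ η, 0 ≤ η → η ≤ 1 →
      c * η ≤ s * wedge (unitVec e φ) (unitVec e (φ + s * η)) := fun φ η h0 h1 => by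
    rcases hs with rfl | rfl
    · simpa using (hlow φ η h0 h1).1
    · simpa [← sub_eq_add_neg] using (hlow φ η h0 h1).2
  set μ := min (κ ^ 2) (τ ^ 2)
  have hμ : 0 < μ := lt_min (by positivity) (by positivity)
  have hlittle := (hasFDerivAt_iff_isLittleO.1 hD).def
    (show 0 < |m| * (μ * c) / (2 * C) by positivity)
  obtain ⟨ε, hε, hball⟩ := Metric.eventually_nhds_iff.1 hlittle
  obtain ⟨δ, hδ, hδlt⟩ := exists_between (show 0 < min (min δ₀ 1) (ε / C) by positivity)
  rw [lt_min_iff, lt_min_iff, lt_div_iff₀ hC] at hδlt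
  obtain ⟨⟨hδ0, hδ1⟩, hδε⟩ := hδlt
  obtain ⟨t, ⟨ht0, ht1⟩, hGt, hwt⟩ := hmove δ hδ hδ0
  have ht1' : 0 ≤ 1 - t := by linarith
  set q : ℂ × ℂ := (unitVec e (φ₁ + s * (δ * t)), unitVec e (φ₂ + s * (δ * (1 - t)))) with hq
  have hqK : q ∈ configs e κ τ := ⟨norm_unitVec _ _, norm_unitVec _ _, hGt, hwt.le⟩
  have hle : energy e κ τ q ≤ energy e κ τ p := hmax hqK
  have hdist : ‖q - p‖ ≤ C * δ := by
    have hb : ∀ φ r, 0 ≤ r → r ≤ 1 → ‖unitVec e (φ + s * (δ * r)) - unitVec e φ‖ ≤ C * δ := by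
      intro φ r h0 h1
      refine (hLip _ _).trans ?_
      rw [abs_mul, hsabs, one_mul, abs_of_nonneg (by positivity)]
      gcongr
      exact mul_le_of_le_one_right hδ.le h1
    refine max_le ?_ ?_
    · have := hb φ₁ t ht0 ht1
      rwa [he1] at this
    · have := hb φ₂ (1 - t) ht1' (by linarith)
      rwa [he2] at this
  have happrox := hball (y := q) (by rw [dist_eq_norm]; linarith)
  have h1 := hlow' φ₁ (δ * t) (by positivity) (by nlinarith)
  have h2 := hlow' φ₂ (δ * (1 - t)) (by positivity) (by nlinarith)
  have hDlow : |m| * (μ * c) * δ ≤ D (q - p) := by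
    have hww : ∀ u v, wedge u (v - u) = wedge u v := fun u v => by simp [wedge]; ring
    have hDs : D (q - p) =
        |m| * (s * (κ ^ 2 * wedge p.1 q.1 + τ ^ 2 * wedge p.2 q.2)) := by
      rw [hDm, Prod.fst_sub, Prod.snd_sub, hww, hww, ← mul_assoc, ← hsm]
    rw [he1] at h1
    rw [he2] at h2
    have k1 : μ * (c * (δ * t)) ≤ κ ^ 2 * (s * wedge p.1 q.1) :=
      mul_le_mul (min_le_left _ _) h1 (by positivity) (by positivity)
    have k2 : μ * (c * (δ * (1 - t))) ≤ τ ^ 2 * (s * wedge p.2 q.2) :=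
      mul_le_mul (min_le_right _ _) h2 (by positivity) (by positivity)
    have k3 : |m| * (μ * c * δ) ≤
        |m| * (s * (κ ^ 2 * wedge p.1 q.1 + τ ^ 2 * wedge p.2 q.2)) :=
      mul_le_mul_of_nonneg_left (by linarith) hma.le
    rw [hDs]
    linarith
  rw [Real.norm_eq_abs] at happrox
  have h3 : |m| * (μ * c) / (2 * C) * ‖q - p‖ ≤ |m| * (μ * c) * δ / 2 := by
    calc _ ≤ |m| * (μ * c) / (2 * C) * (C * δ) := by gcongr
      _ = _ := by field_simp
  have h4 : 0 < |m| * (μ * c) * δ := by positivity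
  linarith [(abs_le.1 happrox).1]

/-- In any two-dimensional real normed space `Y`, for `κ, τ > 0` there
exist unit vectors `y₁, y₂` with `‖κy₁ + τy₂‖ = ‖κy₁ − τy₂‖ = √(κ² + τ²)`. -/
theorem stmt19 {Y : Type*} [NormedAddCommGroup Y] [NormedSpace ℝ Y]
    (hdim : Module.rank ℝ Y = 2) (κ τ : ℝ) (hκ : 0 < κ) (hτ : 0 < τ) :
    ∃ y₁ y₂ : Y, ‖y₁‖ = 1 ∧ ‖y₂‖ = 1 ∧
      ‖κ • y₁ + τ • y₂‖ = Real.sqrt (κ ^ 2 + τ ^ 2) ∧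
      ‖κ • y₁ - τ • y₂‖ = Real.sqrt (κ ^ 2 + τ ^ 2) := by
  have hfin : Module.finrank ℝ Y = 2 := Module.finrank_eq_of_rank_eq (by exact_mod_cast hdim)
  have : FiniteDimensional ℝ Y := Module.finite_of_finrank_pos (by omega)
  let e : ℂ ≃L[ℝ] Y := ContinuousLinearEquiv.ofFinrankEq (by rw [hfin, Complex.finrank_real_complex])
  have hcont : ContinuousOn (energy e κ τ) (configs e κ τ) := fun p hp =>
    let ⟨_, hD, _⟩ := hasFDerivAt_energy e (κ := κ) hτ (wedge_pos_of_mem_configs hκ hτ hp)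
    hD.continuousAt.continuousWithinAt
  obtain ⟨p, hp, hmax⟩ := (isCompact_configs e κ τ).exists_isMaxOn (configs_nonempty e hκ hτ) hcont
  have h := norm_eq_of_isMaxOn hκ hτ hp hmax
  have hplus : ‖κ • e p.1 + τ • e p.2‖ = Real.sqrt (κ ^ 2 + τ ^ 2) := by
    rw [← h, Real.sqrt_sq (norm_nonneg _), map_add, ← Complex.real_smul, ← Complex.real_smul,
      map_smul, map_smul]
  refine ⟨e p.1, e p.2, hp.1, hp.2.1, hplus, ?_⟩
  rw [← hplus]
  have hG := hp.2.2.1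
  rw [diagGap, sub_eq_zero, map_add, map_sub, ← Complex.real_smul, ← Complex.real_smul, map_smul,
    map_smul] at hG
  exact hG.symm
end
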